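/- Let f : ℝ → ℝ be twice continuously differentiable with f'(0) ≥ 0 and with f'' Lipschitz continuous. Let ū : [0,∞) → ℝ be absolutely continuous with ū(0) = 0 and ū' ∈ L²([0,∞)). Then there exists a function u : [0,∞) × [0,∞) → ℝ such that: (a) u is locally Hölder continuous in (t,x); (b) u(0,x) = ū(x) for all x and u(t,0) = 0 for all t; (c) for each t ≥ 0 the map x ↦ u(t,x) is absolutely continuous with ∫₀^∞ u_x(t,x)² dx ≤ ∫₀^∞ ū'(x)² dx; (d) for every t ≥ 0 and almost every x ≥ 0, u(t,x) = ū(x) + ∫₀^t [ −f'(u(s,x))·u_x(s,x) + (1/2)∫₀^x f''(u(s,y))·u_x(s,y)² dy ] ds. -/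

import Mathlib

open MeasureTheory Set Real

/-! The equation is solved in Lagrangian coordinates. Along a characteristic `ẏ = f'(U)` starting at
`ξ`, the Jacobian of the flow is `stretch ^ 2` with `stretch = 1 + ½ w(ξ) ∫₀ᵗ f''(U) ds` and
`w = ū'`, so that `u_x = w / stretch` and the energy density `u_x² dx = w² dξ` is transported
unchanged. Hence `U` satisfies the Volterra equation
`∂ₜU(t, ξ) = ½ ∫₀^ξ f''(U(t, η)) w(η)² dη`, a fixed point problem which is globally contracting in
a weighted norm and in which the blow-up of `u_x` is invisible.

Going back to Eulerian coordinates, the flow may become constant on sets of labels, but `U` takes a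
single value on them, since `|U(ξ) - U(ξ')|² ≤ ∫ w² · |y(ξ) - y(ξ')|` by the Cauchy–Schwarz
inequality. Energy concentrated where `stretch = 0` is not seen by `∫ u_x² dx`, whence the energy
inequality. For fixed `ξ` with `w(ξ) f''(U) ≠ 0`, however, `stretch` vanishes only at isolated
times, so for almost every `t` the loss does not affect the source `½ ∫ f''(u) u_x² dx`. The
integrated equation follows by differentiating in time the mass `∫ u dx`, cut off at a fixed
position, along the characteristic passing through that position.
-/

namespace VariationalWave

open Filter Topology Function

section GeneralLemmas

variable {E : Type*} [NormedAddCommGroup E] [NormedSpace ℝ E]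

theorem sq_integral_mul_le {α : Type*} {_ : MeasurableSpace α} {μ : Measure α} {p q : α → ℝ}
    (hp : MemLp p 2 μ) (hq : MemLp q 2 μ) :
    (∫ x, p x * q x ∂μ) ^ 2 ≤ (∫ x, p x ^ 2 ∂μ) * ∫ x, q x ^ 2 ∂μ := by
  have hpq : Integrable (fun x => p x * q x) μ := hp.integrable_mul hq
  have quadratic_nonneg : ∀ c : ℝ, 0 ≤ (∫ x, q x ^ 2 ∂μ) * (c * c) +
      (2 * ∫ x, p x * q x ∂μ) * c + ∫ x, p x ^ 2 ∂μ := by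
    intro c
    calc 0 ≤ ∫ x, (p x + c * q x) ^ 2 ∂μ := integral_nonneg fun x => sq_nonneg _
      _ = ∫ x, (p x ^ 2 + (2 * c * (p x * q x) + c * c * q x ^ 2)) ∂μ := by
        congr with x; ring
      _ = _ := by
        have hpq' := hpq.const_mul (2 * c)
        have hqq' := hq.integrable_sq.const_mul (c * c)
        rw [integral_add hp.integrable_sq (hpq'.fun_add hqq'), integral_add hpq' hqq',
          integral_const_mul, integral_const_mul]
        ring
  have := discrim_le_zero quadratic_nonneg
  rw [discrim] at this
  linarith

theorem absolutelyContinuousOnInterval_comp {F v : ℝ → ℝ} {a b : ℝ} (hF : ContDiff ℝ 1 F)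
    (hv : AbsolutelyContinuousOnInterval v a b) :
    AbsolutelyContinuousOnInterval (fun x => F (v x)) a b := by
  obtain ⟨B, hB⟩ := isCompact_uIcc.exists_bound_of_continuousOn hv.continuousOn
  have hvB : ∀ x ∈ uIcc a b, v x ∈ Icc (-B) B := fun x hx => abs_le.1 (hB x hx)
  obtain ⟨K, hK⟩ := hF.contDiffOn.exists_lipschitzOnWith one_ne_zero (convex_Icc (-B) B)
    isCompact_Icc
  rw [absolutelyContinuousOnInterval_iff] at hv ⊢
  intro ε hε
  obtain ⟨δ, hδ, h⟩ := hv (ε / (K + 1)) (by positivity)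
  refine ⟨δ, hδ, fun I hI hlt => ?_⟩
  calc ∑ i ∈ Finset.range I.1, dist (F (v (I.2 i).1)) (F (v (I.2 i).2))
      ≤ ∑ i ∈ Finset.range I.1, (K + 1) * dist (v (I.2 i).1) (v (I.2 i).2) := by
        refine Finset.sum_le_sum fun i hi => ?_
        have hmem := hI.1 i (by simpa using hi)
        refine (hK.dist_le_mul _ (hvB _ hmem.1) _ (hvB _ hmem.2)).trans ?_
        gcongr
        linarith
    _ < ε := by
        rw [← Finset.mul_sum, mul_comm, ← lt_div_iff₀ (by positivity)]
        exact h I hI hlt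

theorem integral_deriv_comp_primitive_mul {F F' v : ℝ → ℝ} {a b : ℝ}
    (hF : ∀ x, HasDerivAt F (F' x) x) (hF' : Continuous F')
    (hv : IntervalIntegrable v volume a b) :
    ∫ x in a..b, F' (∫ y in a..x, v y) * v x = F (∫ y in a..b, v y) - F 0 := by
  have hFC : ContDiff ℝ 1 F := contDiff_one_iff_deriv.2
    ⟨fun x => (hF x).differentiableAt, by rwa [funext fun x => (hF x).deriv]⟩
  have hac := absolutelyContinuousOnInterval_comp hFC
    (hv.absolutelyContinuousOnInterval_intervalIntegral (c := a) left_mem_uIcc)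
  rw [← intervalIntegral.integral_same (f := v) (a := a) (μ := volume),
    ← hac.integral_deriv_eq_sub]
  refine intervalIntegral.integral_congr_ae ?_
  filter_upwards [hv.ae_hasDerivAt_integral] with x hx hxab
  exact ((hF _).comp x (hx (uIoc_subset_uIcc hxab) a left_mem_uIcc)).deriv.symm

theorem countable_setOf_eq_and_deriv_ne_zero {φ φ' : ℝ → E} (h : ∀ s, HasDerivAt φ (φ' s) s)
    (c : E) : {s | φ s = c ∧ φ' s ≠ 0}.Countable := by
  set S : Set ℝ := {s | φ s = c ∧ φ' s ≠ 0}
  have isolated : ∀ s ∈ S, 𝓝[S ∩ Ioi s] s = ⊥ := by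
    intro s hs
    have hne : {z | φ z ≠ c} ∈ 𝓝[S ∩ Ioi s] s :=
      nhdsWithin_mono s (fun z hz => ne_of_gt hz.2) ((h s).eventually_ne (c := c) hs.2)
    rw [← empty_mem_iff_bot]
    filter_upwards [hne, self_mem_nhdsWithin] with z hz hzS using hz hzS.1.1
  have hcount := countable_setOfPred_isolated_right_within (s := S)
  rwa [show {s ∈ S | 𝓝[S ∩ Ioi s] s = ⊥} = S from sep_eq_self_iff_mem_true.2 isolated] at hcount

theorem ae_restrict_Ici_eq_of_forall_integral_eq [CompleteSpace E] {p q : ℝ → E} {a : ℝ}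
    (hp : ∀ x, a ≤ x → IntervalIntegrable p volume a x)
    (hq : ∀ x, a ≤ x → IntervalIntegrable q volume a x)
    (h : ∀ x, a ≤ x → ∫ y in a..x, p y = ∫ y in a..x, q y) :
    ∀ᵐ x ∂volume.restrict (Ici a), p x = q x := by
  rw [ae_restrict_iff' measurableSet_Ici]
  have ae_hasDerivAt : ∀ {r : ℝ → E}, (∀ x, a ≤ x → IntervalIntegrable r volume a x) →
      ∀ᵐ x, a < x → HasDerivAt (fun z => ∫ y in a..z, r y) (r x) x := by
    intro r hr
    have := ae_all_iff.2 fun n : ℕ =>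
      (hr (a + n) (le_add_of_nonneg_right n.cast_nonneg)).ae_hasDerivAt_integral
    filter_upwards [this] with x hx hax
    obtain ⟨n, hn⟩ := exists_nat_ge (x - a)
    exact hx n (mem_uIcc_of_le hax.le (by linarith)) a left_mem_uIcc
  have ne_a : ∀ᵐ x : ℝ, x ≠ a := by simp [ae_iff, measure_singleton]
  filter_upwards [ae_hasDerivAt hp, ae_hasDerivAt hq, ne_a] with x hpx hqx hxa hax
  have hlt : a < x := lt_of_le_of_ne hax hxa.symm
  refine (hpx hlt).unique ((hqx hlt).congr_of_eventuallyEq ?_)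
  filter_upwards [Ioi_mem_nhds hlt] with z hz using h z (le_of_lt hz)

theorem hasDerivAt_integral_moving_endpoint [CompleteSpace E] {u : ℝ → ℝ → E}
    (hu : Continuous (uncurry u)) {φ : ℝ → ℝ} {φ' t : ℝ} (hφ : HasDerivAt φ φ' t) :
    HasDerivAt (fun s => ∫ x in (φ t)..(φ s), u s x) (φ' • u t (φ t)) t := by
  have main_term : HasDerivAt (fun s => (φ s - φ t) • u t (φ t)) (φ' • u t (φ t)) t :=
    (hφ.sub_const _).smul_const _
  have error_term :
      HasDerivAt (fun s => ∫ x in (φ t)..(φ s), (u s x - u t (φ t))) 0 t := by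
    rw [hasDerivAt_iff_isLittleO]
    simp only [intervalIntegral.integral_same, sub_zero, smul_zero]
    refine Asymptotics.IsLittleO.trans_isBigO ?_ hφ.isBigO_sub
    rw [Asymptotics.isLittleO_iff]
    intro c hc
    obtain ⟨δ, hδ, near⟩ := Metric.continuousAt_iff.1 (hu.continuousAt (x := (t, φ t))) c hc
    filter_upwards [Metric.ball_mem_nhds t hδ,
      hφ.continuousAt (Metric.ball_mem_nhds (φ t) hδ)] with s hs hφs
    refine intervalIntegral.norm_integral_le_of_norm_le_const fun x hx => ?_
    rw [← dist_eq_norm]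
    refine (near (x := (s, x)) (max_lt hs ?_)).le
    exact (abs_sub_left_of_mem_uIcc (uIoc_subset_uIcc hx)).trans_lt hφs
  refine ((main_term.add error_term).congr_of_eventuallyEq ?_).congr_deriv (add_zero _)
  filter_upwards with s
  rw [Pi.add_apply, intervalIntegral.integral_sub ((hu.uncurry_left s).intervalIntegrable _ _)
    intervalIntegrable_const, intervalIntegral.integral_const, add_sub_cancel]

theorem eq_of_hasDerivAt_eq {p q r : ℝ → E} {a : ℝ} (hp : ∀ t, HasDerivAt p (r t) t)
    (hq : ∀ t, HasDerivAt q (r t) t) (ha : p a = q a) : p = q :=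
  eq_of_fderiv_eq (𝕜 := ℝ) (fun t => (hp t).differentiableAt) (fun t => (hq t).differentiableAt)
    (fun t => (hp t).hasFDerivAt.fderiv.trans (hq t).hasFDerivAt.fderiv.symm) a ha

theorem integral_eq_zero_of_nonpos {h : ℝ → E} (hh : ∀ y ≤ 0, h y = 0) {x : ℝ} (hx : x ≤ 0) :
    ∫ y in (0 : ℝ)..x, h y = 0 := by
  rw [intervalIntegral.integral_congr fun y hy => hh y (uIcc_of_ge hx ▸ hy).2,
    intervalIntegral.integral_zero]

theorem exists_norm_le_of_continuous {F : Type*} [NormedAddCommGroup F] {h : ℝ → ℝ → F}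
    (hh : Continuous (uncurry h)) (R : ℝ) :
    ∃ B, 0 ≤ B ∧ ∀ t x, |t| ≤ R → |x| ≤ R → ‖h t x‖ ≤ B := by
  obtain ⟨B, hB⟩ := (isCompact_Icc.prod isCompact_Icc : IsCompact (Icc (-R) R ×ˢ Icc (-R) R))
    |>.exists_bound_of_continuousOn hh.continuousOn
  exact ⟨|B|, abs_nonneg B, fun t x ht hx =>
    (hB (t, x) ⟨abs_le.1 ht, abs_le.1 hx⟩).trans (le_abs_self B)⟩

theorem exists_norm_sub_le_of_hasDerivAt {h h' : ℝ → ℝ → E}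
    (hd : ∀ t x, HasDerivAt (fun s => h s x) (h' t x) t) (hc : Continuous (uncurry h')) (R : ℝ) :
    ∃ K, 0 ≤ K ∧ ∀ t s x, |t| ≤ R → |s| ≤ R → |x| ≤ R → ‖h t x - h s x‖ ≤ K * |t - s| := by
  obtain ⟨K, hK, hbound⟩ := exists_norm_le_of_continuous hc R
  refine ⟨K, hK, fun t s x ht hs hx => ?_⟩
  exact (convex_Icc (-R) R).norm_image_sub_le_of_norm_hasDerivWithin_le (f := fun r => h r x)
    (fun r _ => (hd r x).hasDerivWithinAt) (fun r hr => hbound r x (abs_le.2 hr) hx)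
    (abs_le.1 hs) (abs_le.1 ht)

theorem norm_integral_le_mul_exp_div {q : ℝ → E} {M l : ℝ} (hl : 0 < l)
    (hq : ∀ s, ‖q s‖ ≤ M * exp (l * |s|)) (t : ℝ) :
    ‖∫ s in (0 : ℝ)..t, q s‖ ≤ M * exp (l * |t|) / l := by
  have hM : 0 ≤ M := by simpa using (norm_nonneg _).trans (hq 0)
  have of_nonneg : ∀ (q : ℝ → E) (t : ℝ), 0 ≤ t → (∀ s, ‖q s‖ ≤ M * exp (l * |s|)) →
      ‖∫ s in (0 : ℝ)..t, q s‖ ≤ M * exp (l * |t|) / l := by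
    intro q t ht hq
    calc ‖∫ s in (0 : ℝ)..t, q s‖ ≤ ∫ s in (0 : ℝ)..t, M * exp (l * s) := by
          refine intervalIntegral.norm_integral_le_of_norm_le ht (ae_of_all _ fun s hs => ?_)
            ((by fun_prop : Continuous fun s => M * exp (l * s)).intervalIntegrable _ _)
          simpa only [abs_of_pos hs.1] using hq s
      _ = M * ((exp (l * t) - 1) / l) := by
          rw [intervalIntegral.integral_const_mul,
            intervalIntegral.integral_comp_mul_left (fun x => exp x) hl.ne', mul_zero, integral_exp,
            exp_zero, smul_eq_mul, inv_mul_eq_div]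
      _ ≤ M * exp (l * |t|) / l := by
          rw [mul_div_assoc, abs_of_nonneg ht]
          gcongr
          linarith
  rcases le_total 0 t with ht | ht
  · exact of_nonneg q t ht hq
  · have := of_nonneg (fun s => q (-s)) (-t) (neg_nonneg.2 ht) fun s => by simpa using hq (-s)
    rwa [intervalIntegral.integral_comp_neg, neg_neg, neg_zero, intervalIntegral.integral_symm,
      norm_neg, abs_neg] at this

end GeneralLemmas

section CaratheodoryFunctions

/-- Functions `H t x` satisfying the Carathéodory condition with respect to the parameter `t`:
continuous in `t`, measurable in `x`, and dominated on every square `|t|, |x| ≤ R` by a locally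
integrable function of `x` alone. Their primitives in `x` are jointly continuous. -/
structure Caratheodory (H : ℝ → ℝ → ℝ) : Prop where
  continuous_param (x : ℝ) : Continuous fun t => H t x
  aestronglyMeasurable (t : ℝ) : AEStronglyMeasurable (H t)
  exists_bound (R : ℝ) : ∃ ρ : ℝ → ℝ, LocallyIntegrable ρ ∧
    ∀ t x, |t| ≤ R → |x| ≤ R → ‖H t x‖ ≤ ρ x

theorem intervalIntegrable_of_locallyIntegrable {ρ : ℝ → ℝ} (hρ : LocallyIntegrable ρ) (a b : ℝ) :
    IntervalIntegrable ρ volume a b :=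
  (hρ.integrableOn_isCompact isCompact_uIcc).intervalIntegrable

theorem abs_le_of_mem_uIoc {a b x : ℝ} (hx : x ∈ uIoc a b) : |x| ≤ max |a| |b| := by
  rcases mem_uIoc.1 hx with hx | hx
  · exact abs_le_max_abs_abs hx.1.le hx.2
  · exact max_comm |a| |b| ▸ abs_le_max_abs_abs hx.1.le hx.2

namespace Caratheodory

variable {H G : ℝ → ℝ → ℝ}

theorem of_locallyIntegrable {ρ : ℝ → ℝ} (hρ : LocallyIntegrable ρ) :
    Caratheodory fun _ => ρ where
  continuous_param _ := continuous_const
  aestronglyMeasurable _ := hρ.aestronglyMeasurable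
  exists_bound _ := ⟨fun x => ‖ρ x‖, fun x => (hρ x).norm, fun _ _ _ _ => le_rfl⟩

theorem add (hH : Caratheodory H) (hG : Caratheodory G) :
    Caratheodory fun t x => H t x + G t x where
  continuous_param x := (hH.continuous_param x).add (hG.continuous_param x)
  aestronglyMeasurable t := (hH.aestronglyMeasurable t).add (hG.aestronglyMeasurable t)
  exists_bound R := by
    obtain ⟨ρ, hρ, hHρ⟩ := hH.exists_bound R
    obtain ⟨σ, hσ, hGσ⟩ := hG.exists_bound R
    exact ⟨fun x => ρ x + σ x, hρ.add hσ, fun t x ht hx =>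
      norm_add_le_of_le (hHρ t x ht hx) (hGσ t x ht hx)⟩

theorem continuous_mul {q : ℝ → ℝ → ℝ} (hq : Continuous (uncurry q)) (hH : Caratheodory H) :
    Caratheodory fun t x => q t x * H t x where
  continuous_param x := (hq.uncurry_right x).mul (hH.continuous_param x)
  aestronglyMeasurable t :=
    (hq.uncurry_left t).aestronglyMeasurable.mul (hH.aestronglyMeasurable t)
  exists_bound R := by
    obtain ⟨B, -, hqB⟩ := exists_norm_le_of_continuous hq R
    obtain ⟨ρ, hρ, hHρ⟩ := hH.exists_bound R
    exact ⟨fun x => B * ρ x, hρ.smul B, fun t x ht hx =>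
      norm_mul_le_of_le (hqB t x ht hx) (hHρ t x ht hx)⟩

theorem eventually_norm_le (hH : Caratheodory H) (t a b : ℝ) : ∃ ρ : ℝ → ℝ, LocallyIntegrable ρ ∧
    ∀ᶠ s in 𝓝 t, ∀ x ∈ uIoc a b, ‖H s x‖ ≤ ρ x := by
  obtain ⟨ρ, hρ, hle⟩ := hH.exists_bound (max (|t| + 1) (max |a| |b|))
  refine ⟨ρ, hρ, ?_⟩
  filter_upwards [continuous_abs.continuousAt.eventually_lt_const (lt_add_one |t|)] with s hs x hx
  exact hle s x (hs.le.trans (le_max_left _ _)) ((abs_le_of_mem_uIoc hx).trans (le_max_right _ _))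

theorem intervalIntegrable (hH : Caratheodory H) (t a b : ℝ) :
    IntervalIntegrable (H t) volume a b := by
  obtain ⟨ρ, hρ, hle⟩ := hH.eventually_norm_le t a b
  refine (intervalIntegrable_of_locallyIntegrable hρ a b).mono_fun'
    (hH.aestronglyMeasurable t).restrict ?_
  exact (ae_restrict_iff' measurableSet_uIoc).2 (ae_of_all _ hle.self_of_nhds)

theorem continuous_primitive (hH : Caratheodory H) :
    Continuous (uncurry fun t x => ∫ y in (0 : ℝ)..x, H t y) := by
  rw [continuous_iff_continuousAt]
  rintro ⟨t, x⟩
  obtain ⟨ρ, hρ, hle⟩ := hH.eventually_norm_le t (-|x| - 1) (|x| + 1)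
  refine intervalIntegral.continuousAt_parametric_primitive_of_dominated ρ (-|x| - 1) (|x| + 1)
    (fun s => (hH.aestronglyMeasurable s).restrict) ?_
    (intervalIntegrable_of_locallyIntegrable hρ _ _)
    (ae_of_all _ fun y => (hH.continuous_param y).continuousAt) ?_ ?_ (measure_singleton x)
  · filter_upwards [hle] with s hs
    exact (ae_restrict_iff' measurableSet_uIoc).2 (ae_of_all _ hs)
  · constructor <;> linarith [abs_nonneg x]
  · constructor <;> linarith [le_abs_self x, neg_abs_le x]

theorem hasDerivAt_integral (hG : Caratheodory G) (hH : Caratheodory H)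
    (hd : ∀ t x, HasDerivAt (fun s => G s x) (H t x) t) (t a b : ℝ) :
    HasDerivAt (fun s => ∫ x in a..b, G s x) (∫ x in a..b, H t x) t := by
  obtain ⟨ρ, hρ, hle⟩ := hH.eventually_norm_le t a b
  exact (intervalIntegral.hasDerivAt_integral_of_dominated_loc_of_deriv_le hle
    (Eventually.of_forall fun s => (hG.aestronglyMeasurable s).restrict)
    (hG.intervalIntegrable t a b) (hH.aestronglyMeasurable t).restrict
    (ae_of_all _ fun x hx s hs => hs x hx) (intervalIntegrable_of_locallyIntegrable hρ a b)
    (ae_of_all _ fun x _ s _ => hd s x)).2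

end Caratheodory

theorem hasDerivAt_integral_param {q : ℝ → ℝ → ℝ} (hq : Continuous (uncurry q)) (t x : ℝ) :
    HasDerivAt (fun t => ∫ s in (0 : ℝ)..t, q s x) (q t x) t :=
  ((hq.uncurry_right x).integral_hasStrictDerivAt 0 t).hasDerivAt

theorem continuous_integral_param {q : ℝ → ℝ → ℝ} (hq : Continuous (uncurry q)) :
    Continuous (uncurry fun t x => ∫ s in (0 : ℝ)..t, q s x) :=
  intervalIntegral.continuous_parametric_intervalIntegral_of_continuous (a₀ := 0)
    (f := fun (p : ℝ × ℝ) s => q s p.2) (hq.comp (continuous_snd.prodMk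
      (continuous_snd.comp continuous_fst))) continuous_fst

end CaratheodoryFunctions

section GeneralizedInverse

/-- The upper generalized inverse of a nondecreasing function. -/
noncomputable def upperInv (y : ℝ → ℝ) (x : ℝ) : ℝ := sSup {ξ | y ξ ≤ x}

theorem gc_upperInv {y : ℝ → ℝ} (hy : Continuous y) (hmono : Monotone y)
    (hbot : Tendsto y atBot atBot) (htop : Tendsto y atTop atTop) :
    GaloisConnection y (upperInv y) := by
  intro ξ x
  have bddAbove : BddAbove {ξ | y ξ ≤ x} := by
    obtain ⟨b, hb⟩ := (htop.eventually_gt_atTop x).exists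
    exact ⟨b, fun z hz => (hmono.reflect_lt (lt_of_le_of_lt hz hb)).le⟩
  have nonempty : {ξ | y ξ ≤ x}.Nonempty := (hbot.eventually_le_atBot x).exists
  have isClosed : IsClosed {ξ | y ξ ≤ x} := isClosed_le hy continuous_const
  exact ⟨fun h => le_csSup bddAbove h,
    fun h => (hmono h).trans (isClosed.csSup_mem nonempty bddAbove)⟩

/-- A nondecreasing absolutely continuous change of coordinate `y` with density `dy = ρ dξ`,
together with its upper generalized inverse `Z`. The density is allowed to vanish, so that `Z`
may jump. -/
structure MonotoneCoordinate (y Z ρ : ℝ → ℝ) : Prop where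
  gc : GaloisConnection y Z
  density_nonneg (ξ : ℝ) : 0 ≤ ρ ξ
  measurable_density : Measurable ρ
  intervalIntegrable (c d : ℝ) : IntervalIntegrable ρ volume c d
  sub_eq (c d : ℝ) : y d - y c = ∫ ξ in c..d, ρ ξ

namespace MonotoneCoordinate

variable {y Z ρ F : ℝ → ℝ}

theorem continuous (h : MonotoneCoordinate y Z ρ) : Continuous y := by
  have hy : y = fun x => y 0 + ∫ ξ in (0 : ℝ)..x, ρ ξ := by
    ext x
    rw [← h.sub_eq, add_sub_cancel]
  rw [hy]
  exact continuous_const.add (intervalIntegral.continuous_primitive h.intervalIntegrable 0)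

theorem apply_inv (h : MonotoneCoordinate y Z ρ) (x : ℝ) : y (Z x) = x := by
  refine le_antisymm (h.gc.l_u_le x) (le_of_not_gt fun hlt => ?_)
  have near : ∀ᶠ c in 𝓝[>] (Z x), y c < x :=
    (h.continuous.continuousAt.eventually_lt_const hlt).filter_mono nhdsWithin_le_nhds
  obtain ⟨c, hc, hZc⟩ := (near.and self_mem_nhdsWithin).exists
  exact (h.gc.le_u hc.le).not_gt hZc

theorem measurable_inv (h : MonotoneCoordinate y Z ρ) : Measurable Z :=
  h.gc.monotone_u.measurable

theorem preimage_Ico (h : MonotoneCoordinate y Z ρ) (c d : ℝ) :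
    Z ⁻¹' Ico c d = Ico (y c) (y d) := by
  ext x
  simp only [mem_preimage, mem_Ico, h.gc.le_iff_le, h.gc.lt_iff_lt]

theorem map_inv (h : MonotoneCoordinate y Z ρ) :
    Measure.map Z volume = volume.withDensity fun ξ => ENNReal.ofReal (ρ ξ) := by
  have map_Ico : ∀ c d, Measure.map Z volume (Ico c d) = ENNReal.ofReal (y d - y c) := by
    intro c d
    rw [Measure.map_apply h.measurable_inv measurableSet_Ico, h.preimage_Ico, volume_Ico]
  refine Measure.ext_of_Ico' _ _ (fun c d _ => ?_) fun c d hcd => ?_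
  · exact map_Ico c d ▸ ENNReal.ofReal_ne_top
  · rw [map_Ico, h.sub_eq, withDensity_apply _ measurableSet_Ico,
      intervalIntegral.integral_of_le hcd.le, ofReal_integral_eq_lintegral_ofReal
        ((intervalIntegrable_iff_integrableOn_Ioc_of_le hcd.le).1 (h.intervalIntegrable c d))
        (ae_of_all _ h.density_nonneg), setLIntegral_congr Ico_ae_eq_Ioc]

theorem setIntegral_comp (h : MonotoneCoordinate y Z ρ) (hF : Measurable F)
    {s : Set ℝ} (hs : MeasurableSet s) :
    ∫ x in Z ⁻¹' s, F (Z x) = ∫ ξ in s, F ξ * ρ ξ := by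
  rw [← setIntegral_map hs hF.aestronglyMeasurable h.measurable_inv.aemeasurable, h.map_inv,
    restrict_withDensity hs, integral_withDensity_eq_integral_toReal_smul
      h.measurable_density.ennreal_ofReal (ae_of_all _ fun _ => ENNReal.ofReal_lt_top)]
  simp only [ENNReal.toReal_ofReal (h.density_nonneg _), smul_eq_mul, mul_comm]

theorem integrableOn_comp_iff (h : MonotoneCoordinate y Z ρ) (hF : Measurable F)
    {s : Set ℝ} (hs : MeasurableSet s) :
    IntegrableOn (fun x => F (Z x)) (Z ⁻¹' s) ↔ IntegrableOn (fun ξ => F ξ * ρ ξ) s := by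
  have hmap := integrable_map_measure (μ := volume.restrict (Z ⁻¹' s)) (f := Z)
    hF.aestronglyMeasurable h.measurable_inv.aemeasurable
  rw [← Measure.restrict_map h.measurable_inv hs, h.map_inv, restrict_withDensity hs,
    integrable_withDensity_iff h.measurable_density.ennreal_ofReal
      (ae_of_all _ fun _ => ENNReal.ofReal_lt_top)] at hmap
  simp only [ENNReal.toReal_ofReal (h.density_nonneg _)] at hmap
  exact hmap.symm

theorem intervalIntegral_comp (h : MonotoneCoordinate y Z ρ) (hF : Measurable F) (c d : ℝ) :
    ∫ x in (y c)..(y d), F (Z x) = ∫ ξ in c..d, F ξ * ρ ξ := by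
  wlog hcd : c ≤ d generalizing c d
  · rw [intervalIntegral.integral_symm, this d c (le_of_not_ge hcd),
      ← intervalIntegral.integral_symm]
  rw [intervalIntegral.integral_of_le hcd, intervalIntegral.integral_of_le (h.gc.monotone_l hcd),
    ← integral_Ico_eq_integral_Ioc, ← integral_Ico_eq_integral_Ioc, ← h.preimage_Ico,
    h.setIntegral_comp hF measurableSet_Ico]

theorem intervalIntegrable_comp (h : MonotoneCoordinate y Z ρ) (hF : Measurable F)
    (hint : ∀ c d, IntervalIntegrable (fun ξ => F ξ * ρ ξ) volume c d) (a b : ℝ) :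
    IntervalIntegrable (fun x => F (Z x)) volume a b := by
  wlog hab : a ≤ b generalizing a b
  · exact (this b a (le_of_not_ge hab)).symm
  rw [intervalIntegrable_iff_integrableOn_Ico_of_le hab, ← h.apply_inv a, ← h.apply_inv b,
    ← h.preimage_Ico, h.integrableOn_comp_iff hF measurableSet_Ico,
    ← intervalIntegrable_iff_integrableOn_Ico_of_le (h.gc.monotone_u hab)]
  exact hint _ _

end MonotoneCoordinate

end GeneralizedInverse

section VolterraEquation

/-- The Volterra operator `h ↦ ∫₀ᵗ ∫₀ˣ h(s, η) ρ(η) dη ds` with density `ρ`. -/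
noncomputable def volterra (ρ : ℝ → ℝ) (h : ℝ → ℝ → ℝ) (t x : ℝ) : ℝ :=
  ∫ s in (0 : ℝ)..t, ∫ η in (0 : ℝ)..x, h s η * ρ η

/-- The weight `exp (l |t|) (1 + |x|)`: for large `l` the Volterra operator contracts the
corresponding weighted supremum norm. -/
noncomputable def volterraWeight (l : ℝ) (p : ℝ × ℝ) : ℝ := exp (l * |p.1|) * (1 + |p.2|)

theorem one_add_abs_le_volterraWeight {l : ℝ} (hl : 0 ≤ l) (p : ℝ × ℝ) :
    1 + |p.2| ≤ volterraWeight l p :=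
  le_mul_of_one_le_left (by positivity) (one_le_exp (by positivity))

theorem volterraWeight_pos (l : ℝ) (p : ℝ × ℝ) : 0 < volterraWeight l p := by
  unfold volterraWeight
  positivity

theorem continuous_volterraWeight (l : ℝ) : Continuous (volterraWeight l) := by
  unfold volterraWeight
  fun_prop

variable {ρ : ℝ → ℝ} {h h' : ℝ → ℝ → ℝ}

theorem Caratheodory.mul_density (hρ : LocallyIntegrable ρ) (hh : Continuous (uncurry h)) :
    Caratheodory fun t x => h t x * ρ x :=
  (Caratheodory.of_locallyIntegrable hρ).continuous_mul hh

theorem continuous_volterra (hρ : LocallyIntegrable ρ) (hh : Continuous (uncurry h)) :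
    Continuous (uncurry (volterra ρ h)) :=
  continuous_integral_param (Caratheodory.mul_density hρ hh).continuous_primitive

theorem volterra_sub (hρ : LocallyIntegrable ρ) (hh : Continuous (uncurry h))
    (hh' : Continuous (uncurry h')) (t x : ℝ) :
    volterra ρ h t x - volterra ρ h' t x = volterra ρ (fun s η => h s η - h' s η) t x := by
  have ch := Caratheodory.mul_density hρ hh
  have ch' := Caratheodory.mul_density hρ hh'
  unfold volterra
  rw [← intervalIntegral.integral_sub
    ((ch.continuous_primitive.uncurry_right x).intervalIntegrable _ _)
    ((ch'.continuous_primitive.uncurry_right x).intervalIntegrable _ _)]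
  congr with s
  rw [← intervalIntegral.integral_sub (ch.intervalIntegrable s 0 x)
    (ch'.intervalIntegrable s 0 x)]
  simp only [sub_mul]

theorem abs_volterra_le (hρ : Integrable ρ) {B l : ℝ} (hl : 0 < l)
    (hb : ∀ s η, |h s η| ≤ B * volterraWeight l (s, η)) (t x : ℝ) :
    |volterra ρ h t x| ≤ B * ((∫ η, |ρ η|) / l) * volterraWeight l (t, x) := by
  have hB : 0 ≤ B := nonneg_of_mul_nonneg_left ((abs_nonneg _).trans (hb 0 0))
    (volterraWeight_pos l _)
  have inner_le : ∀ s, ‖∫ η in (0 : ℝ)..x, h s η * ρ η‖ ≤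
      B * (1 + |x|) * (∫ η, |ρ η|) * exp (l * |s|) := by
    intro s
    calc ‖∫ η in (0 : ℝ)..x, h s η * ρ η‖
        ≤ ∫ η in uIoc 0 x, ‖h s η * ρ η‖ := intervalIntegral.norm_integral_le_integral_norm_uIoc
      _ ≤ ∫ η in uIoc 0 x, B * volterraWeight l (s, x) * |ρ η| := by
        refine integral_mono_of_nonneg (ae_of_all _ fun _ => norm_nonneg _)
          (hρ.abs.const_mul _).integrableOn ?_
        refine (ae_restrict_iff' measurableSet_uIoc).2 (ae_of_all _ fun η hη => ?_)
        have hηx : |η| ≤ |x| := by simpa using abs_le_of_mem_uIoc hη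
        dsimp only
        rw [norm_mul, norm_eq_abs, norm_eq_abs]
        refine mul_le_mul_of_nonneg_right ((hb s η).trans ?_) (abs_nonneg _)
        unfold volterraWeight
        gcongr
      _ ≤ B * volterraWeight l (s, x) * ∫ η, |ρ η| := by
        rw [integral_const_mul]
        have := volterraWeight_pos l (s, x)
        gcongr
        exacts [ae_of_all _ fun _ => abs_nonneg _, hρ.abs, Measure.restrict_le_self]
      _ = _ := by unfold volterraWeight; ring
  refine (norm_integral_le_mul_exp_div hl inner_le t).trans_eq ?_
  unfold volterraWeight
  ring

variable {k φ : ℝ → ℝ} {K : NNReal}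

theorem abs_le_add_mul_abs_of_lipschitzWith (hk : LipschitzWith K k) (v : ℝ) :
    |k v| ≤ |k 0| + K * |v| := by
  have := hk.norm_sub_le v 0
  rw [sub_zero, norm_eq_abs, norm_eq_abs] at this
  linarith [abs_sub_abs_le_abs_sub (k v) (k 0)]

theorem abs_comp_volterraWeight_mul_le (hk : LipschitzWith K k) {l : ℝ} (hl : 0 ≤ l)
    (z : BoundedContinuousFunction (ℝ × ℝ) ℝ) (p : ℝ × ℝ) :
    |k (volterraWeight l p * z p)| ≤ (|k 0| + K * ‖z‖) * volterraWeight l p := by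
  have one_le : 1 ≤ volterraWeight l p :=
    (le_add_of_nonneg_right (abs_nonneg _)).trans (one_add_abs_le_volterraWeight hl p)
  calc |k (volterraWeight l p * z p)|
      ≤ |k 0| + K * (volterraWeight l p * |z p|) := by
        simpa only [abs_mul, abs_of_pos (volterraWeight_pos l p)] using
          abs_le_add_mul_abs_of_lipschitzWith hk (volterraWeight l p * z p)
    _ ≤ |k 0| * volterraWeight l p + K * (volterraWeight l p * ‖z‖) := by
        have := volterraWeight_pos l p
        gcongr
        · exact le_mul_of_one_le_right (abs_nonneg _) one_le
        · exact z.norm_coe_le_norm p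
    _ = _ := by ring

theorem abs_comp_volterraWeight_mul_sub_le (hk : LipschitzWith K k) (l : ℝ)
    (z z' : BoundedContinuousFunction (ℝ × ℝ) ℝ) (p : ℝ × ℝ) :
    |k (volterraWeight l p * z p) - k (volterraWeight l p * z' p)| ≤
      K * dist z z' * volterraWeight l p := by
  have := volterraWeight_pos l p
  calc |k (volterraWeight l p * z p) - k (volterraWeight l p * z' p)|
      ≤ K * (volterraWeight l p * dist (z p) (z' p)) := by
        simpa only [norm_eq_abs, ← mul_sub, abs_mul, abs_of_pos this, dist_eq] using
          hk.norm_sub_le (volterraWeight l p * z p) (volterraWeight l p * z' p)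
    _ ≤ K * (volterraWeight l p * dist z z') := by
        gcongr
        exact z.dist_coe_le_dist p
    _ = _ := by ring

theorem exists_weighted_volterra (hk : LipschitzWith K k) (hφ : Continuous φ) {C : ℝ}
    (hφC : ∀ x, |φ x| ≤ C * (1 + |x|)) (hρ : Integrable ρ) {l : ℝ} (hl : 0 < l) :
    ∃ T : BoundedContinuousFunction (ℝ × ℝ) ℝ → BoundedContinuousFunction (ℝ × ℝ) ℝ,
      ∀ z p, volterraWeight l p * T z p = φ p.2 +
        volterra ρ (fun s η => k (volterraWeight l (s, η) * z (s, η))) p.1 p.2 := by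
  set W := volterraWeight l
  have hW : Continuous W := continuous_volterraWeight l
  have hW0 : ∀ p, 0 < W p := volterraWeight_pos l
  have hC : 0 ≤ C := by simpa using (abs_nonneg _).trans (hφC 0)
  let V (z : BoundedContinuousFunction (ℝ × ℝ) ℝ) (p : ℝ × ℝ) : ℝ :=
    φ p.2 + volterra ρ (fun s η => k (W (s, η) * z (s, η))) p.1 p.2
  have hV : ∀ z, Continuous (V z) := fun z => (hφ.comp continuous_snd).add
    (continuous_volterra hρ.locallyIntegrable (hk.continuous.comp (hW.mul z.continuous)))
  have bound : ∀ z p, ‖V z p / W p‖ ≤ C + (|k 0| + K * ‖z‖) * ((∫ η, |ρ η|) / l) := by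
    intro z p
    rw [norm_div, norm_eq_abs, norm_eq_abs, abs_of_pos (hW0 p), div_le_iff₀ (hW0 p), add_mul]
    refine (abs_add_le _ _).trans (add_le_add ((hφC _).trans ?_) ?_)
    · exact mul_le_mul_of_nonneg_left (one_add_abs_le_volterraWeight hl.le p) hC
    · exact abs_volterra_le hρ hl (fun s η => abs_comp_volterraWeight_mul_le hk hl.le z (s, η)) _ _
  exact ⟨fun z => BoundedContinuousFunction.ofNormedAddCommGroup (fun p => V z p / W p)
    ((hV z).div hW fun p => (hW0 p).ne') _ (bound z), fun z p => mul_div_cancel₀ _ (hW0 p).ne'⟩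

theorem exists_eq_add_volterra (hk : LipschitzWith K k) (hφ : Continuous φ) {C : ℝ}
    (hφC : ∀ x, |φ x| ≤ C * (1 + |x|)) (hρ : Integrable ρ) :
    ∃ U : ℝ → ℝ → ℝ, Continuous (uncurry U) ∧
      ∀ t x, U t x = φ x + volterra ρ (fun s η => k (U s η)) t x := by
  set M := ∫ η, |ρ η|
  have : 0 ≤ M := integral_nonneg fun _ => abs_nonneg _
  set l : ℝ := 2 * (K * M + 1)
  have hl : 0 < l := by positivity
  set W := volterraWeight l
  have hW : Continuous W := continuous_volterraWeight l
  have hW0 : ∀ p, 0 < W p := volterraWeight_pos l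
  obtain ⟨T, hT⟩ := exists_weighted_volterra hk hφ hφC hρ hl
  have hH : ∀ z : BoundedContinuousFunction (ℝ × ℝ) ℝ,
      Continuous (uncurry fun s η => k (W (s, η) * z (s, η))) := fun z =>
    hk.continuous.comp (hW.mul z.continuous)
  have half : K * (M / l) ≤ 1 / 2 := by
    rw [← mul_div_assoc, div_le_iff₀ hl]
    simp only [l]
    linarith
  have contracting : ContractingWith (1 / 2) T := by
    refine ⟨by norm_num, LipschitzWith.of_dist_le_mul fun z z' => ?_⟩
    refine (BoundedContinuousFunction.dist_le (by positivity)).2 fun p => ?_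
    refine le_of_mul_le_mul_left ?_ (hW0 p)
    calc W p * dist (T z p) (T z' p) = |W p * T z p - W p * T z' p| := by
          rw [← mul_sub, abs_mul, abs_of_pos (hW0 p), dist_eq]
      _ ≤ K * dist z z' * (M / l) * W p := by
          rw [hT, hT, add_sub_add_left_eq_sub, volterra_sub hρ.locallyIntegrable (hH z) (hH z')]
          exact abs_volterra_le hρ hl
            (fun s η => abs_comp_volterraWeight_mul_sub_le hk l z z' (s, η)) _ _
      _ = W p * (K * (M / l) * dist z z') := by ring
      _ ≤ W p * (1 / 2 * dist z z') := by
          have := hW0 p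
          gcongr
  obtain ⟨z, hz⟩ : ∃ z, T z = z := ⟨_, contracting.fixedPoint_isFixedPt⟩
  refine ⟨fun t x => W (t, x) * z (t, x), hW.mul z.continuous, fun t x => ?_⟩
  rw [← hT z (t, x), hz]

end VolterraEquation

section LagrangianSolution

theorem abs_sub_le_of_lipschitzWith_deriv {g : ℝ → ℝ} {K : NNReal} (hg : Differentiable ℝ g)
    (hK : LipschitzWith K (deriv g)) (v : ℝ) :
    |g v - g 0| ≤ (|deriv g 0| + K * |v|) * |v| := by
  have bound : ∀ z ∈ uIcc 0 v, ‖deriv g z‖ ≤ |deriv g 0| + K * |v| := by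
    intro z hz
    have hzv : |z| ≤ |v| := by simpa using abs_sub_left_of_mem_uIcc hz
    refine (abs_le_add_mul_abs_of_lipschitzWith hK z).trans ?_
    gcongr
  simpa using (convex_uIcc 0 v).norm_image_sub_le_of_norm_deriv_le (fun z _ => hg z) bound
    left_mem_uIcc right_mem_uIcc

/-- The data of the Cauchy problem: a flux `f`, a Lipschitz constant `L` of `f''`, and the slope
`w` of the initial datum, extended by zero to the negative half-line. -/
structure WaveData where
  f : ℝ → ℝ
  L : NNReal
  w : ℝ → ℝ
  contDiff_f : ContDiff ℝ 2 f
  deriv_zero_nonneg : 0 ≤ deriv f 0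
  lipschitz_deriv_deriv : LipschitzWith L (deriv (deriv f))
  measurable_w : Measurable w
  w_of_nonpos {x : ℝ} : x ≤ 0 → w x = 0
  integrable_sq_w : Integrable fun x => w x ^ 2

namespace WaveData

variable (D : WaveData)

/-- The energy `∫ w²` of the initial datum. -/
noncomputable def energy : ℝ := ∫ x, D.w x ^ 2

/-- The initial datum, as the primitive of its slope. -/
noncomputable def initial (x : ℝ) : ℝ := ∫ y in (0 : ℝ)..x, D.w y

theorem energy_nonneg : 0 ≤ D.energy :=
  integral_nonneg fun _ => sq_nonneg _

theorem continuous_deriv_deriv : Continuous (deriv (deriv D.f)) :=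
  D.lipschitz_deriv_deriv.continuous

theorem contDiff_deriv : ContDiff ℝ 1 (deriv D.f) :=
  D.contDiff_f.deriv' (n := 1)

theorem hasDerivAt_f (v : ℝ) : HasDerivAt D.f (deriv D.f v) v :=
  (D.contDiff_f.differentiable two_ne_zero v).hasDerivAt

theorem hasDerivAt_deriv (v : ℝ) : HasDerivAt (deriv D.f) (deriv (deriv D.f) v) v :=
  (D.contDiff_deriv.differentiable one_ne_zero v).hasDerivAt

theorem memLp_w : MemLp D.w 2 :=
  (memLp_two_iff_integrable_sq D.measurable_w.aestronglyMeasurable).2 D.integrable_sq_w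

theorem locallyIntegrable_w : LocallyIntegrable D.w :=
  D.memLp_w.locallyIntegrable one_le_two

theorem continuous_initial : Continuous D.initial :=
  intervalIntegral.continuous_primitive
    (intervalIntegrable_of_locallyIntegrable D.locallyIntegrable_w) 0

theorem setIntegral_sq_w_le (s : Set ℝ) : ∫ x in s, D.w x ^ 2 ≤ D.energy :=
  setIntegral_le_integral D.integrable_sq_w (ae_of_all _ fun _ => sq_nonneg _)

theorem abs_initial_le (x : ℝ) : |D.initial x| ≤ (1 + D.energy) * (1 + |x|) := by
  have hone : IntervalIntegrable (fun _ => (1 : ℝ)) volume 0 x := intervalIntegrable_const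
  have hw2 : IntervalIntegrable (fun y => D.w y ^ 2) volume 0 x :=
    D.integrable_sq_w.intervalIntegrable
  calc |D.initial x| ≤ |∫ y in (0 : ℝ)..x, (1 + D.w y ^ 2)| := by
        refine intervalIntegral.norm_integral_le_abs_of_norm_le (f := D.w)
          (ae_of_all _ fun y => ?_) (hone.add hw2)
        rw [norm_eq_abs, ← sq_abs (D.w y)]
        nlinarith [sq_nonneg (|D.w y| - 1)]
    _ ≤ |x| + |∫ y in (0 : ℝ)..x, D.w y ^ 2| := by
        rw [intervalIntegral.integral_add hone hw2]
        simpa using abs_add_le x _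
    _ ≤ |x| + D.energy := by
        rw [intervalIntegral.abs_intervalIntegral_eq,
          abs_of_nonneg (integral_nonneg fun _ => sq_nonneg _)]
        gcongr
        exact D.setIntegral_sq_w_le _
    _ ≤ (1 + D.energy) * (1 + |x|) := by
        nlinarith [abs_nonneg x, D.energy_nonneg]

theorem exists_lagSol : ∃ U : ℝ → ℝ → ℝ, Continuous (uncurry U) ∧ ∀ t x, U t x = D.initial x +
    volterra (fun η => 1 / 2 * D.w η ^ 2) (fun s η => deriv (deriv D.f) (U s η)) t x :=
  exists_eq_add_volterra D.lipschitz_deriv_deriv D.continuous_initial D.abs_initial_le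
    (D.integrable_sq_w.const_mul _)

/-- The solution `U(t, ξ)` in Lagrangian coordinates, i.e. its value along the characteristic
starting at `ξ`. -/
noncomputable def lagSol : ℝ → ℝ → ℝ := D.exists_lagSol.choose

/-- The integral `∫₀ᵗ f''(U(s, ξ)) ds` along a characteristic. -/
noncomputable def curvIntegral (t ξ : ℝ) : ℝ :=
  ∫ s in (0 : ℝ)..t, deriv (deriv D.f) (D.lagSol s ξ)

/-- The square root of the Jacobian of the flow; its sign is kept, since the gradient
`w / stretch` of the solution changes sign when the characteristics focus. -/
noncomputable def stretch (t ξ : ℝ) : ℝ := 1 + 1 / 2 * D.w ξ * D.curvIntegral t ξ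

/-- The source `½ ∫₀^x f''(u) u_x² dx` in Lagrangian coordinates. -/
noncomputable def lagSource (t ξ : ℝ) : ℝ :=
  ∫ η in (0 : ℝ)..ξ, deriv (deriv D.f) (D.lagSol t η) * (1 / 2 * D.w η ^ 2)

/-- The position at time `t` of the characteristic starting at `ξ`, defined through its
Jacobian `stretch ^ 2`. -/
noncomputable def flow (t ξ : ℝ) : ℝ :=
  deriv D.f 0 * t + ∫ η in (0 : ℝ)..ξ, D.stretch t η ^ 2

theorem continuous_lagSol : Continuous (uncurry D.lagSol) :=
  D.exists_lagSol.choose_spec.1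

theorem lagSol_eq (t ξ : ℝ) : D.lagSol t ξ = D.initial ξ + ∫ s in (0 : ℝ)..t, D.lagSource s ξ :=
  D.exists_lagSol.choose_spec.2 t ξ

theorem continuous_deriv_lagSol : Continuous (uncurry fun t ξ => deriv D.f (D.lagSol t ξ)) :=
  D.contDiff_deriv.continuous.comp D.continuous_lagSol

theorem continuous_deriv_deriv_lagSol :
    Continuous (uncurry fun t ξ => deriv (deriv D.f) (D.lagSol t ξ)) :=
  D.continuous_deriv_deriv.comp D.continuous_lagSol

theorem continuous_curvIntegral : Continuous (uncurry D.curvIntegral) :=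
  continuous_integral_param D.continuous_deriv_deriv_lagSol

theorem measurable_stretch : Measurable (uncurry D.stretch) :=
  ((D.measurable_w.comp measurable_snd).const_mul _).mul D.continuous_curvIntegral.measurable
    |>.const_add _

theorem stretch_zero (ξ : ℝ) : D.stretch 0 ξ = 1 := by
  simp [stretch, curvIntegral]

theorem hasDerivAt_stretch (t ξ : ℝ) : HasDerivAt (fun s => D.stretch s ξ)
    (1 / 2 * D.w ξ * deriv (deriv D.f) (D.lagSol t ξ)) t :=
  ((hasDerivAt_integral_param D.continuous_deriv_deriv_lagSol t ξ).const_mul _).const_add _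

theorem caratheodory_w : Caratheodory fun _ => D.w :=
  .of_locallyIntegrable D.locallyIntegrable_w

theorem caratheodory_sq_w : Caratheodory fun _ ξ => D.w ξ ^ 2 :=
  .of_locallyIntegrable D.integrable_sq_w.locallyIntegrable

theorem caratheodory_w_mul_stretch : Caratheodory fun t ξ => D.w ξ * D.stretch t ξ := by
  have := D.caratheodory_w.add
    (D.caratheodory_sq_w.continuous_mul (q := fun t ξ => 1 / 2 * D.curvIntegral t ξ)
      (D.continuous_curvIntegral.const_mul _))
  convert! this using 3
  simp only [stretch]
  ring

theorem caratheodory_sq_stretch : Caratheodory fun t ξ => D.stretch t ξ ^ 2 := by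
  have := ((Caratheodory.of_locallyIntegrable (locallyIntegrable_const 1)).add
    (D.caratheodory_w.continuous_mul D.continuous_curvIntegral)).add
    (D.caratheodory_sq_w.continuous_mul (q := fun t ξ => 1 / 4 * D.curvIntegral t ξ ^ 2)
      ((D.continuous_curvIntegral.pow 2).const_mul _))
  convert! this using 3
  simp only [stretch]
  ring

theorem caratheodory_lagSource :
    Caratheodory fun t ξ => deriv (deriv D.f) (D.lagSol t ξ) * (1 / 2 * D.w ξ ^ 2) :=
  .mul_density (D.integrable_sq_w.const_mul _).locallyIntegrable D.continuous_deriv_deriv_lagSol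

theorem continuous_lagSource : Continuous (uncurry D.lagSource) :=
  D.caratheodory_lagSource.continuous_primitive

theorem hasDerivAt_lagSol (t ξ : ℝ) :
    HasDerivAt (fun s => D.lagSol s ξ) (D.lagSource t ξ) t := by
  simp only [lagSol_eq]
  exact (hasDerivAt_integral_param D.continuous_lagSource t ξ).const_add _

theorem lagSol_eq_integral (t ξ : ℝ) :
    D.lagSol t ξ = ∫ η in (0 : ℝ)..ξ, D.w η * D.stretch t η := by
  refine congrFun (eq_of_hasDerivAt_eq (p := fun s => D.lagSol s ξ)
    (q := fun s => ∫ η in (0 : ℝ)..ξ, D.w η * D.stretch s η) (a := 0)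
    (fun s => D.hasDerivAt_lagSol s ξ) (fun s => ?_) ?_) t
  · refine D.caratheodory_w_mul_stretch.hasDerivAt_integral D.caratheodory_lagSource
      (fun s η => ?_) s 0 ξ
    exact ((D.hasDerivAt_stretch s η).const_mul (D.w η)).congr_deriv (by ring)
  · simp [lagSol_eq, stretch_zero, initial]

theorem lagSol_of_nonpos (t : ℝ) {ξ : ℝ} (hξ : ξ ≤ 0) : D.lagSol t ξ = 0 := by
  rw [lagSol_eq_integral, integral_eq_zero_of_nonpos (fun η hη => ?_) hξ]
  rw [D.w_of_nonpos hη, zero_mul]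

theorem lagSol_sub (t c d : ℝ) :
    D.lagSol t d - D.lagSol t c = ∫ η in c..d, D.w η * D.stretch t η := by
  rw [lagSol_eq_integral, lagSol_eq_integral, intervalIntegral.integral_interval_sub_left] <;>
    exact D.caratheodory_w_mul_stretch.intervalIntegrable t _ _

theorem integral_deriv_lagSol {F F' : ℝ → ℝ} (hF : ∀ v, HasDerivAt F (F' v) v)
    (hF' : Continuous F') (t ξ : ℝ) :
    ∫ η in (0 : ℝ)..ξ, F' (D.lagSol t η) * (D.w η * D.stretch t η) =
      F (D.lagSol t ξ) - F 0 := by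
  simpa only [← lagSol_eq_integral] using integral_deriv_comp_primitive_mul hF hF'
    (D.caratheodory_w_mul_stretch.intervalIntegrable t 0 ξ)

end WaveData

end LagrangianSolution

section Characteristics

namespace WaveData

variable (D : WaveData)

theorem hasDerivAt_flow (t ξ : ℝ) :
    HasDerivAt (fun s => D.flow s ξ) (deriv D.f (D.lagSol t ξ)) t := by
  have hint := D.caratheodory_sq_stretch.hasDerivAt_integral
    (D.caratheodory_w_mul_stretch.continuous_mul D.continuous_deriv_deriv_lagSol)
    (fun s η => ((D.hasDerivAt_stretch s η).pow 2).congr_deriv (by ring)) t 0 ξ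
  refine (((hasDerivAt_id t).const_mul (deriv D.f 0)).add hint).congr_deriv ?_
  rw [D.integral_deriv_lagSol D.hasDerivAt_deriv D.continuous_deriv_deriv]
  ring

theorem continuous_flow : Continuous (uncurry D.flow) :=
  (continuous_fst.const_mul _).add D.caratheodory_sq_stretch.continuous_primitive

theorem flow_zero_left (ξ : ℝ) : D.flow 0 ξ = ξ := by
  simp [flow, stretch_zero]

theorem flow_of_nonpos (t : ℝ) {ξ : ℝ} (hξ : ξ ≤ 0) : D.flow t ξ = deriv D.f 0 * t + ξ := by
  rw [flow, intervalIntegral.integral_congr (g := fun _ => 1) fun η hη => ?_]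
  · simp
  · simp [stretch, D.w_of_nonpos (uIcc_of_ge hξ ▸ hη).2]

theorem flow_sub (t c d : ℝ) : D.flow t d - D.flow t c = ∫ η in c..d, D.stretch t η ^ 2 := by
  rw [flow, flow, add_sub_add_left_eq_sub, intervalIntegral.integral_interval_sub_left] <;>
    exact D.caratheodory_sq_stretch.intervalIntegrable t _ _

theorem monotone_flow (t : ℝ) : Monotone (D.flow t) := fun c d hcd =>
  sub_nonneg.1 (D.flow_sub t c d ▸
    intervalIntegral.integral_nonneg hcd fun _ _ => sq_nonneg _)

theorem sq_lagSol_sub_le (t c d : ℝ) :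
    (D.lagSol t d - D.lagSol t c) ^ 2 ≤ D.energy * |D.flow t d - D.flow t c| := by
  have memLp_stretch : MemLp (D.stretch t) 2 (volume.restrict (uIoc c d)) :=
    (memLp_two_iff_integrable_sq (D.measurable_stretch.of_uncurry_left).aestronglyMeasurable).2
      (D.caratheodory_sq_stretch.intervalIntegrable t c d).def'
  calc (D.lagSol t d - D.lagSol t c) ^ 2
      = (∫ η in uIoc c d, D.w η * D.stretch t η) ^ 2 := by
        rw [lagSol_sub, ← sq_abs, intervalIntegral.abs_intervalIntegral_eq, sq_abs]
    _ ≤ (∫ η in uIoc c d, D.w η ^ 2) * ∫ η in uIoc c d, D.stretch t η ^ 2 :=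
        sq_integral_mul_le (D.memLp_w.restrict _) memLp_stretch
    _ ≤ D.energy * |D.flow t d - D.flow t c| := by
        have nonneg : 0 ≤ ∫ η in uIoc c d, D.stretch t η ^ 2 := integral_nonneg fun _ => sq_nonneg _
        rw [flow_sub, intervalIntegral.abs_intervalIntegral_eq, abs_of_nonneg nonneg]
        gcongr
        exact D.setIntegral_sq_w_le _

theorem lagSol_eq_of_flow_eq {t c d : ℝ} (h : D.flow t c = D.flow t d) :
    D.lagSol t c = D.lagSol t d := by
  have := D.sq_lagSol_sub_le t d c
  rw [h, sub_self, abs_zero, mul_zero] at this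
  exact sub_eq_zero.1 (pow_eq_zero_iff two_ne_zero |>.1 (this.antisymm (sq_nonneg _)))

theorem sq_lagSol_le (t ξ : ℝ) :
    D.lagSol t ξ ^ 2 ≤ D.energy * (|D.flow t ξ| + deriv D.f 0 * |t|) := by
  have h := D.sq_lagSol_sub_le t 0 ξ
  rw [D.lagSol_of_nonpos t le_rfl, sub_zero, D.flow_of_nonpos t le_rfl, add_zero] at h
  refine h.trans (mul_le_mul_of_nonneg_left ((abs_sub _ _).trans ?_) D.energy_nonneg)
  rw [abs_mul, abs_of_nonneg D.deriv_zero_nonneg]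

theorem exists_abs_deriv_lagSol_le (R : ℝ) : ∃ K ε, ∀ t ξ, |t| ≤ R →
    |deriv D.f (D.lagSol t ξ)| ≤ K * |D.flow t ξ| + ε := by
  set B := |deriv (deriv D.f) 0|
  set c := deriv D.f 0
  have hc : 0 ≤ c := D.deriv_zero_nonneg
  have hE := D.energy_nonneg
  refine ⟨(B + D.L) * D.energy, (B + D.L) * D.energy * (c * R) + B + c, fun t ξ ht => ?_⟩
  set v := D.lagSol t ξ
  have velocity_le := abs_sub_le_of_lipschitzWith_deriv
    (D.contDiff_deriv.differentiable one_ne_zero) D.lipschitz_deriv_deriv v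
  calc |deriv D.f v| ≤ (B + D.L * |v|) * |v| + c := by
        rw [← abs_of_nonneg hc]
        linarith [abs_sub_abs_le_abs_sub (deriv D.f v) c]
    _ ≤ (B + D.L) * v ^ 2 + B + c := by
        have hB : 0 ≤ B := abs_nonneg _
        rw [← sq_abs v]
        nlinarith [mul_nonneg hB (sq_nonneg (|v| - 1)), mul_nonneg hB (sq_nonneg |v|)]
    _ ≤ (B + D.L) * (D.energy * (|D.flow t ξ| + c * R)) + B + c := by
        gcongr
        exact (D.sq_lagSol_le t ξ).trans (by gcongr)
    _ = _ := by ring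

theorem exists_abs_le_of_abs_flow_le (R : ℝ) :
    ∃ R', ∀ t ξ, |t| ≤ R → |D.flow t ξ| ≤ R → |ξ| ≤ R' := by
  obtain ⟨K, ε, speed_le⟩ := D.exists_abs_deriv_lagSol_le R
  refine ⟨gronwallBound R (R * K) (R * ε) 1, fun t ξ ht hξ => ?_⟩
  -- Grönwall along the characteristic followed backwards from time `t` to time `0`
  have hd : ∀ s, HasDerivAt (fun s => D.flow ((1 - s) * t) ξ)
      (deriv D.f (D.lagSol ((1 - s) * t) ξ) * -t) s := fun s => by
    refine (D.hasDerivAt_flow _ ξ).comp s ?_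
    simpa using ((hasDerivAt_id s).const_sub 1).mul_const t
  have gronwall := norm_le_gronwallBound_of_norm_deriv_right_le (δ := R) (K := R * K)
    (ε := R * ε) (a := 0) (b := 1) (fun s _ => (hd s).continuousAt.continuousWithinAt)
    (fun s _ => (hd s).hasDerivWithinAt) (by simpa using hξ) (fun s hs => ?_) 1
    (right_mem_Icc.2 zero_le_one)
  · simpa [flow_zero_left] using gronwall
  · have hst : |(1 - s) * t| ≤ R := by
      rw [abs_mul, abs_of_nonneg (by linarith [hs.2])]
      nlinarith [hs.1, abs_nonneg t]
    have := speed_le _ ξ hst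
    rw [norm_mul, norm_neg, norm_eq_abs, norm_eq_abs, norm_eq_abs]
    exact (mul_le_mul this ht (abs_nonneg t) ((abs_nonneg _).trans this)).trans_eq (by ring)

theorem tendsto_flow_atBot (t : ℝ) : Tendsto (D.flow t) atBot atBot := by
  refine (tendsto_atBot_add_const_left atBot (deriv D.f 0 * t) tendsto_id).congr' ?_
  filter_upwards [eventually_le_atBot 0] with ξ hξ using (D.flow_of_nonpos t hξ).symm

theorem tendsto_flow_atTop (t : ℝ) : Tendsto (D.flow t) atTop atTop := by
  refine tendsto_atTop_atTop_of_monotone (D.monotone_flow t) fun b => ?_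
  by_contra! hlt
  obtain ⟨R, hR⟩ := D.exists_abs_le_of_abs_flow_le (max |t| (max |D.flow t 0| |b|))
  have hξ : (0 : ℝ) ≤ |R| + 1 := by positivity
  have := hR t (|R| + 1) (le_max_left _ _)
    ((abs_le_max_abs_abs (D.monotone_flow t hξ) (hlt _).le).trans (le_max_right _ _))
  rw [abs_of_nonneg hξ] at this
  linarith [le_abs_self R]

/-- The label `ξ` of a characteristic which is at position `x` at time `t`. -/
noncomputable def label (t : ℝ) : ℝ → ℝ := upperInv (D.flow t)

theorem coordinate (t : ℝ) :
    MonotoneCoordinate (D.flow t) (D.label t) fun ξ => D.stretch t ξ ^ 2 where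
  gc := gc_upperInv (D.continuous_flow.uncurry_left t) (D.monotone_flow t)
    (D.tendsto_flow_atBot t) (D.tendsto_flow_atTop t)
  density_nonneg _ := sq_nonneg _
  measurable_density := D.measurable_stretch.of_uncurry_left.pow_const 2
  intervalIntegrable := D.caratheodory_sq_stretch.intervalIntegrable t
  sub_eq := D.flow_sub t

theorem flow_label (t x : ℝ) : D.flow t (D.label t x) = x :=
  (D.coordinate t).apply_inv x

theorem measurable_label : Measurable (uncurry D.label) := by
  refine measurable_of_Iio fun c => ?_
  have : uncurry D.label ⁻¹' Iio c = {p | p.2 < D.flow p.1 c} := by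
    ext p
    exact (D.coordinate p.1).gc.lt_iff_lt.symm
  rw [this]
  exact (isOpen_lt continuous_snd
    ((D.continuous_flow.uncurry_right c).comp continuous_fst)).measurableSet

end WaveData

end Characteristics

section EulerianSolution

namespace WaveData

variable (D : WaveData)

/-- The solution `u(t, x)` of the Cauchy problem. -/
noncomputable def sol (t x : ℝ) : ℝ := D.lagSol t (D.label t x)

/-- The slope `u_x` along the characteristic starting at `ξ`. Where `stretch` vanishes the division
returns `0`; by the change of variables these labels form a null set of positions. -/
noncomputable def lagSlope (t ξ : ℝ) : ℝ := D.w ξ / D.stretch t ξ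

/-- The slope `u_x(t, x)` of the solution. -/
noncomputable def solDeriv (t x : ℝ) : ℝ := D.lagSlope t (D.label t x)

theorem sol_flow (t ξ : ℝ) : D.sol t (D.flow t ξ) = D.lagSol t ξ :=
  D.lagSol_eq_of_flow_eq (D.flow_label t _)

theorem measurable_comp_label {h : ℝ → ℝ → ℝ} (hh : Measurable (uncurry h)) :
    Measurable (uncurry fun t x => h t (D.label t x)) :=
  hh.comp (measurable_fst.prodMk D.measurable_label)

theorem measurable_lagSlope : Measurable (uncurry D.lagSlope) :=
  (D.measurable_w.comp measurable_snd).div D.measurable_stretch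

theorem lagSlope_of_nonpos (t : ℝ) {ξ : ℝ} (hξ : ξ ≤ 0) : D.lagSlope t ξ = 0 := by
  rw [lagSlope, D.w_of_nonpos hξ, zero_div]

theorem lagSlope_mul_sq_stretch (t ξ : ℝ) :
    D.lagSlope t ξ * D.stretch t ξ ^ 2 = D.w ξ * D.stretch t ξ := by
  rcases eq_or_ne (D.stretch t ξ) 0 with h | h
  · simp [h]
  · rw [lagSlope]
    field_simp

theorem sq_lagSlope_mul_sq_stretch_le (t ξ : ℝ) :
    D.lagSlope t ξ ^ 2 * D.stretch t ξ ^ 2 ≤ D.w ξ ^ 2 := by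
  rw [← mul_pow, lagSlope, div_mul_eq_mul_div]
  rcases eq_or_ne (D.stretch t ξ) 0 with h | h
  · simpa [h] using sq_nonneg (D.w ξ)
  · rw [mul_div_cancel_right₀ _ h]

theorem flow_neg_mul {t : ℝ} (ht : 0 ≤ t) : D.flow t (-(deriv D.f 0 * t)) = 0 := by
  rw [D.flow_of_nonpos t (neg_nonpos.2 (mul_nonneg D.deriv_zero_nonneg ht)), add_neg_cancel]

theorem integral_comp_label {t : ℝ} (ht : 0 ≤ t) {F : ℝ → ℝ} (hF : Measurable F)
    (hF0 : ∀ ξ ≤ 0, F ξ = 0)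
    (hint : ∀ c d, IntervalIntegrable (fun ξ => F ξ * D.stretch t ξ ^ 2) volume c d) (x : ℝ) :
    ∫ z in (0 : ℝ)..x, F (D.label t z) =
      ∫ ξ in (0 : ℝ)..D.label t x, F ξ * D.stretch t ξ ^ 2 := by
  set c := -(deriv D.f 0 * t)
  have hc : c ≤ 0 := neg_nonpos.2 (mul_nonneg D.deriv_zero_nonneg ht)
  have integral_left : ∫ ξ in (0 : ℝ)..c, F ξ * D.stretch t ξ ^ 2 = 0 :=
    integral_eq_zero_of_nonpos (fun ξ hξ => by rw [hF0 ξ hξ, zero_mul]) hc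
  calc ∫ z in (0 : ℝ)..x, F (D.label t z)
      = ∫ z in (D.flow t c)..(D.flow t (D.label t x)), F (D.label t z) := by
        rw [D.flow_neg_mul ht, D.flow_label]
    _ = ∫ ξ in c..D.label t x, F ξ * D.stretch t ξ ^ 2 :=
        (D.coordinate t).intervalIntegral_comp hF _ _
    _ = ∫ ξ in (0 : ℝ)..D.label t x, F ξ * D.stretch t ξ ^ 2 := by
        rw [← intervalIntegral.integral_interval_sub_left (hint 0 _) (hint 0 c), integral_left,
          sub_zero]

theorem sol_zero_left (x : ℝ) : D.sol 0 x = D.initial x := by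
  have hsol : D.sol 0 x = D.lagSol 0 x := by
    simpa only [flow_zero_left] using D.sol_flow 0 x
  rw [hsol, lagSol_eq, intervalIntegral.integral_same, add_zero]

theorem sol_zero_right {t : ℝ} (ht : 0 ≤ t) : D.sol t 0 = 0 := by
  have hsol := D.sol_flow t (-(deriv D.f 0 * t))
  rwa [D.flow_neg_mul ht,
    D.lagSol_of_nonpos t (neg_nonpos.2 (mul_nonneg D.deriv_zero_nonneg ht))] at hsol

theorem intervalIntegrable_lagSlope_mul (t c d : ℝ) :
    IntervalIntegrable (fun ξ => D.lagSlope t ξ * D.stretch t ξ ^ 2) volume c d := by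
  simpa only [lagSlope_mul_sq_stretch] using D.caratheodory_w_mul_stretch.intervalIntegrable t c d

theorem intervalIntegrable_solDeriv (t a b : ℝ) :
    IntervalIntegrable (D.solDeriv t) volume a b :=
  (D.coordinate t).intervalIntegrable_comp D.measurable_lagSlope.of_uncurry_left
    (D.intervalIntegrable_lagSlope_mul t) a b

theorem sol_eq_integral {t : ℝ} (ht : 0 ≤ t) (x : ℝ) :
    D.sol t x = ∫ z in (0 : ℝ)..x, D.solDeriv t z := by
  have change := D.integral_comp_label ht D.measurable_lagSlope.of_uncurry_left
    (fun _ => D.lagSlope_of_nonpos t) (D.intervalIntegrable_lagSlope_mul t) x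
  simp only [lagSlope_mul_sq_stretch, ← lagSol_eq_integral] at change
  exact change.symm

theorem integrable_sq_lagSlope_mul (t : ℝ) :
    Integrable fun ξ => D.lagSlope t ξ ^ 2 * D.stretch t ξ ^ 2 := by
  refine D.integrable_sq_w.mono' ((D.measurable_lagSlope.of_uncurry_left.pow_const 2).mul
    (D.measurable_stretch.of_uncurry_left.pow_const 2)).aestronglyMeasurable
    (ae_of_all _ fun ξ => ?_)
  rw [norm_of_nonneg (by positivity)]
  exact D.sq_lagSlope_mul_sq_stretch_le t ξ

theorem integrable_sq_solDeriv (t : ℝ) : Integrable fun x => D.solDeriv t x ^ 2 := by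
  rw [← integrableOn_univ, ← preimage_univ (f := D.label t)]
  exact ((D.coordinate t).integrableOn_comp_iff
    (D.measurable_lagSlope.of_uncurry_left.pow_const 2) MeasurableSet.univ).2
    (D.integrable_sq_lagSlope_mul t).integrableOn

theorem integral_sq_solDeriv_le (t : ℝ) : ∫ x, D.solDeriv t x ^ 2 ≤ D.energy := by
  have change := (D.coordinate t).setIntegral_comp
    ((D.measurable_lagSlope.of_uncurry_left (x := t)).pow_const 2) MeasurableSet.univ
  rw [preimage_univ, setIntegral_univ, setIntegral_univ] at change
  exact change.trans_le (integral_mono (D.integrable_sq_lagSlope_mul t) D.integrable_sq_w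
    (D.sq_lagSlope_mul_sq_stretch_le t))

theorem setIntegral_sq_solDeriv_le (t : ℝ) (s : Set ℝ) :
    ∫ x in s, D.solDeriv t x ^ 2 ≤ D.energy :=
  (setIntegral_le_integral (D.integrable_sq_solDeriv t) (ae_of_all _ fun _ => sq_nonneg _)).trans
    (D.integral_sq_solDeriv_le t)

theorem exists_abs_label_le (R : ℝ) :
    ∃ R', R ≤ R' ∧ ∀ t x, |t| ≤ R → |x| ≤ R → |D.label t x| ≤ R' := by
  obtain ⟨R', hR'⟩ := D.exists_abs_le_of_abs_flow_le R
  exact ⟨max R R', le_max_left _ _, fun t x ht hx =>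
    (hR' t _ ht (by rwa [flow_label])).trans (le_max_right _ _)⟩

theorem abs_sol_sub_le (t x z : ℝ) : |D.sol t x - D.sol t z| ≤ √(D.energy * |x - z|) := by
  have h := D.sq_lagSol_sub_le t (D.label t z) (D.label t x)
  rw [flow_label, flow_label] at h
  exact abs_le_sqrt h

theorem exists_abs_sol_sub_le (R : ℝ) : ∃ C, 0 < C ∧ ∀ t x s z, |t| ≤ R → |x| ≤ R → |s| ≤ R →
    |D.sol t x - D.sol s z| ≤ C * √(|t - s| + |x - z|) := by
  obtain ⟨R', hRR', label_le⟩ := D.exists_abs_label_le R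
  obtain ⟨K, hK, lagSol_sub_le⟩ :=
    exists_norm_sub_le_of_hasDerivAt D.hasDerivAt_lagSol D.continuous_lagSource R'
  obtain ⟨M, hM, flow_sub_le⟩ :=
    exists_norm_sub_le_of_hasDerivAt D.hasDerivAt_flow D.continuous_deriv_lagSol R'
  have hE := D.energy_nonneg
  refine ⟨K * √(2 * R) + √(D.energy * (M + 1)) + 1, by positivity,
    fun t x s z ht hx hs => ?_⟩
  set ξ := D.label t x
  set δ := |t - s| + |x - z|
  have hξ : |ξ| ≤ R' := label_le t x ht hx
  have hts : |t - s| ≤ √(2 * R) * √δ := by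
    have htR : |t - s| ≤ 2 * R := by linarith [abs_sub t s]
    have htδ : |t - s| ≤ δ := le_add_of_nonneg_right (abs_nonneg (x - z))
    have hR : 0 ≤ 2 * R := (abs_nonneg _).trans htR
    rw [← sqrt_mul hR]
    exact le_sqrt_of_sq_le (by rw [sq]; gcongr)
  have along : |D.sol t x - D.lagSol s ξ| ≤ K * (√(2 * R) * √δ) :=
    (lagSol_sub_le t s ξ (ht.trans hRR') (hs.trans hRR') hξ).trans (by gcongr)
  have across : |D.lagSol s ξ - D.sol s z| ≤ √(D.energy * (M + 1)) * √δ := by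
    rw [← sol_flow, ← sqrt_mul (by positivity), mul_assoc]
    refine (D.abs_sol_sub_le s _ z).trans ?_
    gcongr
    have hflow := flow_sub_le t s ξ (ht.trans hRR') (hs.trans hRR') hξ
    rw [flow_label, norm_eq_abs, abs_sub_comm] at hflow
    have := abs_sub_le (D.flow s ξ) x z
    nlinarith [abs_nonneg (t - s), abs_nonneg (x - z)]
  calc |D.sol t x - D.sol s z|
      ≤ |D.sol t x - D.lagSol s ξ| + |D.lagSol s ξ - D.sol s z| := abs_sub_le _ _ _
    _ ≤ (K * √(2 * R) + √(D.energy * (M + 1)) + 1) * √δ := by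
        linarith [sqrt_nonneg δ]

theorem continuous_sol : Continuous (uncurry D.sol) := by
  refine continuous_iff_continuousAt.2 fun p => ?_
  obtain ⟨C, -, hC⟩ := D.exists_abs_sol_sub_le (‖p‖ + 1)
  have modulus_tendsto :
      Tendsto (fun q : ℝ × ℝ => C * √(|q.1 - p.1| + |q.2 - p.2|)) (𝓝 p) (𝓝 0) := by
    have : Continuous fun q : ℝ × ℝ => C * √(|q.1 - p.1| + |q.2 - p.2|) := by fun_prop
    simpa using this.tendsto p
  refine tendsto_iff_dist_tendsto_zero.2
    (squeeze_zero' (Eventually.of_forall fun _ => dist_nonneg) ?_ modulus_tendsto)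
  filter_upwards [continuous_norm.continuousAt.eventually_lt_const (lt_add_one ‖p‖)] with q hq
  exact hC _ _ _ _ ((norm_fst_le q).trans hq.le) ((norm_snd_le q).trans hq.le)
    ((norm_fst_le p).trans (lt_add_one ‖p‖).le)

end WaveData

end EulerianSolution

section Mass

namespace WaveData

variable (D : WaveData)

/-- The mass `∫ u dx` between the characteristics starting at `0` and at `ξ`. -/
noncomputable def lagMass (t ξ : ℝ) : ℝ :=
  ∫ η in (0 : ℝ)..ξ, D.lagSol t η * D.stretch t η ^ 2

/-- The mass of the source between the characteristics starting at `0` and at `ξ`. -/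
noncomputable def lagSourceMass (t ξ : ℝ) : ℝ :=
  ∫ η in (0 : ℝ)..ξ, D.lagSource t η * D.stretch t η ^ 2

/-- The mass `∫ u dx` between the characteristic starting at `0` and the position `x`. -/
noncomputable def mass (t x : ℝ) : ℝ := ∫ z in (deriv D.f 0 * t)..x, D.sol t z

theorem caratheodory_lagSol_mul : Caratheodory fun t ξ => D.lagSol t ξ * D.stretch t ξ ^ 2 :=
  D.caratheodory_sq_stretch.continuous_mul D.continuous_lagSol

theorem caratheodory_lagSource_mul :
    Caratheodory fun t ξ => D.lagSource t ξ * D.stretch t ξ ^ 2 :=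
  D.caratheodory_sq_stretch.continuous_mul D.continuous_lagSource

theorem hasDerivAt_lagMass (t ξ : ℝ) : HasDerivAt (fun s => D.lagMass s ξ)
    (D.lagSourceMass t ξ + (D.lagSol t ξ * deriv D.f (D.lagSol t ξ) -
      (D.f (D.lagSol t ξ) - D.f 0))) t := by
  have transport := D.caratheodory_w_mul_stretch.continuous_mul
    (q := fun t ξ => D.lagSol t ξ * deriv (deriv D.f) (D.lagSol t ξ))
    (D.continuous_lagSol.mul D.continuous_deriv_deriv_lagSol)
  refine (D.caratheodory_lagSol_mul.hasDerivAt_integral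
    (D.caratheodory_lagSource_mul.add transport) (fun s η => ?_) t 0 ξ).congr_deriv ?_
  · exact ((D.hasDerivAt_lagSol s η).mul ((D.hasDerivAt_stretch s η).fun_pow 2)).congr_deriv
      (by ring)
  -- `v ↦ v f'(v) - (f(v) - f(0))` is a primitive of `v ↦ v f''(v)`
  · have chain := D.integral_deriv_lagSol (F := fun v => v * deriv D.f v - (D.f v - D.f 0))
      (F' := fun v => v * deriv (deriv D.f) v)
      (fun v => (((hasDerivAt_id v).mul (D.hasDerivAt_deriv v)).sub
        ((D.hasDerivAt_f v).sub_const _)).congr_deriv (by simp))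
      (continuous_id.mul D.continuous_deriv_deriv) t ξ
    rw [intervalIntegral.integral_add (D.caratheodory_lagSource_mul.intervalIntegrable t 0 ξ)
      (transport.intervalIntegrable t 0 ξ), chain, lagSourceMass]
    ring

theorem intervalIntegrable_sol (t a b : ℝ) : IntervalIntegrable (D.sol t) volume a b :=
  (D.continuous_sol.uncurry_left t).intervalIntegrable a b

theorem mass_flow (t ξ : ℝ) : D.mass t (D.flow t ξ) = D.lagMass t ξ := by
  have change := (D.coordinate t).intervalIntegral_comp
    (D.continuous_lagSol.uncurry_left t).measurable 0 ξ
  rwa [D.flow_of_nonpos t le_rfl, add_zero] at change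

theorem hasDerivAt_mass (t x : ℝ) : HasDerivAt (fun s => D.mass s x)
    (D.lagSourceMass t (D.label t x) - (D.f (D.sol t x) - D.f 0)) t := by
  set ξ := D.label t x
  -- the characteristic through `(t, x)` cuts off a mass whose derivative is known
  have split : (fun s => D.mass s x) =
      fun s => D.lagMass s ξ - ∫ z in (D.flow t ξ)..(D.flow s ξ), D.sol s z := by
    ext s
    rw [← mass_flow, mass, mass, D.flow_label t x, eq_sub_iff_add_eq]
    exact intervalIntegral.integral_add_adjacent_intervals (D.intervalIntegrable_sol s _ _)
      (D.intervalIntegrable_sol s _ _)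
  rw [split]
  refine ((D.hasDerivAt_lagMass t ξ).sub (hasDerivAt_integral_moving_endpoint D.continuous_sol
    (D.hasDerivAt_flow t ξ))).congr_deriv ?_
  rw [sol_flow, smul_eq_mul, show D.sol t x = D.lagSol t ξ from rfl]
  ring

theorem exists_norm_comp_label_le {h : ℝ → ℝ → ℝ} (hh : Continuous (uncurry h)) (R : ℝ) :
    ∃ B, ∀ t x, |t| ≤ R → |x| ≤ R → ‖h t (D.label t x)‖ ≤ B := by
  obtain ⟨R', hRR', label_le⟩ := D.exists_abs_label_le R
  obtain ⟨B, -, hB⟩ := exists_norm_le_of_continuous hh R'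
  exact ⟨B, fun t x ht hx => hB t _ (ht.trans hRR') (label_le t x ht hx)⟩

theorem intervalIntegrable_lagSourceMass (x a b : ℝ) :
    IntervalIntegrable (fun t => D.lagSourceMass t (D.label t x)) volume a b := by
  have hcont := D.caratheodory_lagSource_mul.continuous_primitive
  obtain ⟨B, hB⟩ := D.exists_norm_comp_label_le hcont (max (max |a| |b|) |x|)
  refine (intervalIntegrable_const (c := B)).mono_fun'
    (D.measurable_comp_label hcont.measurable).of_uncurry_right.aestronglyMeasurable
    ((ae_restrict_iff' measurableSet_uIoc).2 (ae_of_all _ fun t ht => ?_))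
  exact hB t x ((abs_le_of_mem_uIoc ht).trans (le_max_left _ _)) (le_max_right _ _)

theorem mass_sub_mass_zero (t x : ℝ) : D.mass t x - D.mass 0 x =
    ∫ s in (0 : ℝ)..t, (D.lagSourceMass s (D.label s x) - (D.f (D.sol s x) - D.f 0)) := by
  refine (intervalIntegral.integral_eq_sub_of_hasDerivAt (fun s _ => D.hasDerivAt_mass s x)
    ((D.intervalIntegrable_lagSourceMass x 0 t).sub ?_)).symm
  exact ((D.contDiff_f.continuous.comp (D.continuous_sol.uncurry_right x)).sub
    continuous_const).intervalIntegrable _ _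

end WaveData

end Mass

section IntegratedEquation

instance isFiniteMeasure_restrict_uIoc (a b : ℝ) :
    IsFiniteMeasure (volume.restrict (uIoc a b)) :=
  isFiniteMeasure_restrict_Ioc _ _

namespace WaveData

variable (D : WaveData)

/-- The source of the equation: `½ ∫₀^x f''(u) u_x² dx` together with, at focusing times, the
contribution of the concentrated energy. -/
noncomputable def source (t x : ℝ) : ℝ := D.lagSource t (D.label t x)

/-- The right-hand side `-f'(u) u_x + source` of the equation. -/
noncomputable def rate (t x : ℝ) : ℝ :=
  -(deriv D.f (D.sol t x)) * D.solDeriv t x + D.source t x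

theorem lagSource_of_nonpos (t : ℝ) {ξ : ℝ} (hξ : ξ ≤ 0) : D.lagSource t ξ = 0 :=
  integral_eq_zero_of_nonpos (fun η hη => by rw [D.w_of_nonpos hη]; ring) hξ

theorem mass_eq_integral {t : ℝ} (ht : 0 ≤ t) (x : ℝ) :
    D.mass t x = ∫ z in (0 : ℝ)..x, D.sol t z := by
  rw [← D.flow_label t x, mass_flow, D.flow_label]
  exact (D.integral_comp_label ht (D.continuous_lagSol.uncurry_left t).measurable
    (fun _ => D.lagSol_of_nonpos t) (D.caratheodory_lagSol_mul.intervalIntegrable t) x).symm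

theorem integral_source {t : ℝ} (ht : 0 ≤ t) (x : ℝ) :
    ∫ z in (0 : ℝ)..x, D.source t z = D.lagSourceMass t (D.label t x) :=
  D.integral_comp_label ht (D.continuous_lagSource.uncurry_left t).measurable
    (fun _ => D.lagSource_of_nonpos t) (D.caratheodory_lagSource_mul.intervalIntegrable t) x

theorem integral_deriv_mul_solDeriv {t : ℝ} (ht : 0 ≤ t) (x : ℝ) :
    ∫ z in (0 : ℝ)..x, deriv D.f (D.sol t z) * D.solDeriv t z = D.f (D.sol t x) - D.f 0 := by
  have density (ξ : ℝ) : deriv D.f (D.lagSol t ξ) * D.lagSlope t ξ * D.stretch t ξ ^ 2 =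
      deriv D.f (D.lagSol t ξ) * (D.w ξ * D.stretch t ξ) := by
    rw [mul_assoc, lagSlope_mul_sq_stretch]
  have change := D.integral_comp_label ht
    (F := fun ξ => deriv D.f (D.lagSol t ξ) * D.lagSlope t ξ)
    ((D.continuous_deriv_lagSol.uncurry_left t).measurable.mul
      D.measurable_lagSlope.of_uncurry_left)
    (fun ξ hξ => by rw [D.lagSlope_of_nonpos t hξ, mul_zero])
    (fun c d => by
      simpa only [density] using
        (D.caratheodory_w_mul_stretch.continuous_mul
          D.continuous_deriv_lagSol).intervalIntegrable t c d) x
  simp only [density] at change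
  exact change.trans (D.integral_deriv_lagSol D.hasDerivAt_f D.contDiff_deriv.continuous t _)

theorem integral_rate {t : ℝ} (ht : 0 ≤ t) (x : ℝ) : ∫ z in (0 : ℝ)..x, D.rate t z =
    D.lagSourceMass t (D.label t x) - (D.f (D.sol t x) - D.f 0) := by
  have transport : IntervalIntegrable (fun z => deriv D.f (D.sol t z) * D.solDeriv t z)
      volume 0 x :=
    (D.intervalIntegrable_solDeriv t 0 x).continuousOn_mul
      (D.contDiff_deriv.continuous.comp (D.continuous_sol.uncurry_left t)).continuousOn
  have source : IntervalIntegrable (D.source t) volume 0 x :=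
    (D.coordinate t).intervalIntegrable_comp (D.continuous_lagSource.uncurry_left t).measurable
      (D.caratheodory_lagSource_mul.intervalIntegrable t) 0 x
  rw [← D.integral_source ht, ← D.integral_deriv_mul_solDeriv ht,
    ← intervalIntegral.integral_sub source transport]
  refine intervalIntegral.integral_congr fun z _ => ?_
  simp only [rate]
  ring

theorem measurable_solDeriv : Measurable (uncurry D.solDeriv) :=
  D.measurable_comp_label D.measurable_lagSlope

theorem integrable_solDeriv_prod (t x : ℝ) : Integrable (uncurry D.solDeriv)
    ((volume.restrict (uIoc 0 t)).prod (volume.restrict (uIoc 0 x))) := by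
  have hm := D.measurable_solDeriv
  suffices hsq : Integrable (fun p => uncurry D.solDeriv p ^ 2)
      ((volume.restrict (uIoc 0 t)).prod (volume.restrict (uIoc 0 x))) from
    ((memLp_two_iff_integrable_sq hm.aestronglyMeasurable).2 hsq).integrable one_le_two
  have hsqm : AEStronglyMeasurable (fun p => uncurry D.solDeriv p ^ 2)
      ((volume.restrict (uIoc 0 t)).prod (volume.restrict (uIoc 0 x))) :=
    (hm.pow_const 2).aestronglyMeasurable
  refine (integrable_prod_iff hsqm).2
    ⟨ae_of_all _ fun s => (D.integrable_sq_solDeriv s).integrableOn, ?_⟩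
  refine (integrable_const D.energy).mono' hsqm.norm.integral_prod_right'
    (ae_of_all _ fun s => ?_)
  rw [norm_of_nonneg (integral_nonneg fun _ => norm_nonneg _)]
  simpa only [uncurry, norm_of_nonneg (sq_nonneg _)] using D.setIntegral_sq_solDeriv_le s _

theorem integrable_rate_prod (t x : ℝ) : Integrable (uncurry D.rate)
    ((volume.restrict (uIoc 0 t)).prod (volume.restrict (uIoc 0 x))) := by
  set R := max |t| |x|
  have mem_square : ∀ᵐ p ∂(volume.restrict (uIoc 0 t)).prod (volume.restrict (uIoc 0 x)),
      |p.1| ≤ R ∧ |p.2| ≤ R := by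
    rw [Measure.prod_restrict]
    filter_upwards [ae_restrict_mem (measurableSet_uIoc.prod measurableSet_uIoc)] with p hp
    have h1 := abs_le_of_mem_uIoc hp.1
    have h2 := abs_le_of_mem_uIoc hp.2
    rw [abs_zero, max_eq_right (abs_nonneg _)] at h1 h2
    exact ⟨h1.trans (le_max_left _ _), h2.trans (le_max_right _ _)⟩
  obtain ⟨B, hB⟩ := D.exists_norm_comp_label_le D.continuous_deriv_lagSol R
  obtain ⟨B', hB'⟩ := D.exists_norm_comp_label_le D.continuous_lagSource R
  refine Integrable.add ((D.integrable_solDeriv_prod t x).bdd_mul (c := B) ?_ ?_)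
    ((integrable_const B').mono' ?_ ?_)
  · exact (D.measurable_comp_label D.continuous_deriv_lagSol.measurable).neg.aestronglyMeasurable
  · filter_upwards [mem_square] with p hp
    exact (norm_neg _).trans_le (hB _ _ hp.1 hp.2)
  · exact (D.measurable_comp_label D.continuous_lagSource.measurable).aestronglyMeasurable
  · filter_upwards [mem_square] with p hp using hB' _ _ hp.1 hp.2

theorem integral_integral_rate {t x : ℝ} (ht : 0 ≤ t) :
    ∫ z in (0 : ℝ)..x, ∫ s in (0 : ℝ)..t, D.rate s z = D.mass t x - D.mass 0 x := by
  have integrableOn : IntegrableOn (uncurry D.rate) (uIoc 0 t ×ˢ uIoc 0 x) := by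
    rw [IntegrableOn, Measure.volume_eq_prod, ← Measure.prod_restrict]
    exact D.integrable_rate_prod t x
  rw [← intervalIntegral_intervalIntegral_swap integrableOn, mass_sub_mass_zero]
  exact intervalIntegral.integral_congr fun s hs =>
    D.integral_rate (uIcc_of_le ht ▸ hs).1 x

theorem ae_sol_eq_initial_add_integral_rate {t : ℝ} (ht : 0 ≤ t) :
    ∀ᵐ x ∂volume.restrict (Ici 0), D.sol t x = D.initial x + ∫ s in (0 : ℝ)..t, D.rate s x := by
  have initial_int (x : ℝ) : IntervalIntegrable D.initial volume 0 x :=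
    D.continuous_initial.intervalIntegrable 0 x
  have rate_int (x : ℝ) :
      IntervalIntegrable (fun z => ∫ s in (0 : ℝ)..t, D.rate s z) volume 0 x := by
    have := (D.integrable_rate_prod t x).integral_prod_right
    simpa only [intervalIntegrable_iff, IntegrableOn, intervalIntegral.integral_of_le ht,
      uIoc_of_le ht, uncurry] using this
  refine ae_restrict_Ici_eq_of_forall_integral_eq
    (fun x _ => D.intervalIntegrable_sol t 0 x)
    (fun x _ => (initial_int x).add (rate_int x)) fun x _ => ?_
  rw [intervalIntegral.integral_add (initial_int x) (rate_int x), D.integral_integral_rate ht,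
    ← D.mass_eq_integral ht, D.mass_eq_integral le_rfl]
  simp only [sol_zero_left]
  ring

theorem ae_ae_stretch_ne_zero_or : ∀ᵐ t, ∀ᵐ ξ,
    D.stretch t ξ = 0 → 1 / 2 * D.w ξ * deriv (deriv D.f) (D.lagSol t ξ) = 0 := by
  have hm : MeasurableSet {p : ℝ × ℝ | D.stretch p.1 p.2 = 0 →
      1 / 2 * D.w p.2 * deriv (deriv D.f) (D.lagSol p.1 p.2) = 0} := by
    have rate_measurable : Measurable fun p : ℝ × ℝ =>
        1 / 2 * D.w p.2 * deriv (deriv D.f) (D.lagSol p.1 p.2) :=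
      ((D.measurable_w.comp measurable_snd).const_mul _).mul
        D.continuous_deriv_deriv_lagSol.measurable
    exact (D.measurable_stretch (measurableSet_singleton 0)).imp
      (rate_measurable (measurableSet_singleton 0))
  refine (Measure.ae_ae_comm hm).2 (ae_of_all _ fun ξ => ?_)
  filter_upwards [(countable_setOf_eq_and_deriv_ne_zero
    (fun s => D.hasDerivAt_stretch s ξ) 0).ae_notMem volume] with t ht hstretch
  exact not_not.1 fun hne => ht ⟨hstretch, hne⟩

theorem ae_source_eq : ∀ᵐ t, 0 ≤ t → ∀ x, D.source t x =
    1 / 2 * ∫ z in (0 : ℝ)..x, deriv (deriv D.f) (D.sol t z) * D.solDeriv t z ^ 2 := by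
  filter_upwards [D.ae_ae_stretch_ne_zero_or] with t focusing ht x
  have density : ∀ᵐ ξ, 1 / 2 * (deriv (deriv D.f) (D.lagSol t ξ) * D.lagSlope t ξ ^ 2) *
      D.stretch t ξ ^ 2 = deriv (deriv D.f) (D.lagSol t ξ) * (1 / 2 * D.w ξ ^ 2) := by
    filter_upwards [focusing] with ξ hξ
    rw [lagSlope]
    rcases eq_or_ne (D.stretch t ξ) 0 with h | h
    · rw [h]
      linear_combination -(D.w ξ) * hξ h
    · field_simp
  have change := D.integral_comp_label ht
    (F := fun ξ => 1 / 2 * (deriv (deriv D.f) (D.lagSol t ξ) * D.lagSlope t ξ ^ 2))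
    (((D.continuous_deriv_deriv_lagSol.uncurry_left t).measurable.mul
      (D.measurable_lagSlope.of_uncurry_left.pow_const 2)).const_mul _)
    (fun ξ hξ => by rw [D.lagSlope_of_nonpos t hξ]; ring)
    (fun c d => (D.caratheodory_lagSource.intervalIntegrable t c d).congr_ae
      (ae_restrict_of_ae (density.mono fun _ h => h.symm))) x
  rw [intervalIntegral.integral_const_mul] at change
  exact (change.trans (intervalIntegral.integral_congr_ae (density.mono fun _ h _ => h))).symm

theorem ae_sol_eq {t : ℝ} (ht : 0 ≤ t) : ∀ᵐ x ∂volume.restrict (Ici 0),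
    D.sol t x = D.initial x + ∫ s in (0 : ℝ)..t, (-(deriv D.f (D.sol s x)) * D.solDeriv s x +
      1 / 2 * ∫ z in (0 : ℝ)..x, deriv (deriv D.f) (D.sol s z) * D.solDeriv s z ^ 2) := by
  filter_upwards [D.ae_sol_eq_initial_add_integral_rate ht] with x hx
  rw [hx]
  congr 1
  refine intervalIntegral.integral_congr_ae ?_
  filter_upwards [D.ae_source_eq] with s source_eq hs
  rw [rate, source_eq (uIoc_of_le ht ▸ hs).1.le x]

end WaveData

end IntegratedEquation

section InitialData

theorem exists_measurable_extension_by_zero {v : ℝ → ℝ}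
    (hv : ∀ x, 0 ≤ x → IntervalIntegrable v volume 0 x) :
    ∃ w : ℝ → ℝ, Measurable w ∧ (∀ x ≤ 0, w x = 0) ∧ v =ᵐ[volume.restrict (Ioi 0)] w := by
  have hm : AEStronglyMeasurable v (volume.restrict (Ioi 0)) := by
    refine (aecover_Iic tendsto_natCast_atTop_atTop).aestronglyMeasurable fun n : ℕ => ?_
    rw [Measure.restrict_restrict measurableSet_Iic, inter_comm, Ioi_inter_Iic]
    exact (hv n n.cast_nonneg).aestronglyMeasurable
  refine ⟨(Ioi 0).indicator (hm.mk v), hm.stronglyMeasurable_mk.measurable.indicator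
    measurableSet_Ioi, fun x hx => indicator_of_notMem (notMem_Ioi.2 hx) _, ?_⟩
  filter_upwards [hm.ae_eq_mk, ae_restrict_mem measurableSet_Ioi] with x hx hpos
  rwa [indicator_of_mem hpos]

theorem exists_waveData {f : ℝ → ℝ} (hf : ContDiff ℝ 2 f) (hf0 : 0 ≤ deriv f 0) {L : NNReal}
    (hL : LipschitzWith L (deriv (deriv f))) {v : ℝ → ℝ}
    (hv : ∀ x, 0 ≤ x → IntervalIntegrable v volume 0 x)
    (hv2 : IntegrableOn (fun x => v x ^ 2) (Ici 0)) :
    ∃ D : WaveData, D.f = f ∧ (∀ x, 0 ≤ x → D.initial x = ∫ y in (0 : ℝ)..x, v y) ∧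
      D.energy = ∫ x in Ici 0, v x ^ 2 := by
  obtain ⟨w, hw, w_of_nonpos, hvw⟩ := exists_measurable_extension_by_zero hv
  have hvw2 : (fun x => v x ^ 2) =ᵐ[volume.restrict (Ioi 0)] fun x => w x ^ 2 :=
    hvw.mono fun x hx => congrArg (· ^ 2) hx
  have support_sq : support (fun x => w x ^ 2) ⊆ Ioi 0 := fun x hx =>
    mem_Ioi.2 <| not_le.1 fun hx0 => hx (by simp only [w_of_nonpos x hx0, zero_pow two_ne_zero])
  refine ⟨{
    f := f, L := L, w := w
    contDiff_f := hf
    deriv_zero_nonneg := hf0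
    lipschitz_deriv_deriv := hL
    measurable_w := hw
    w_of_nonpos := w_of_nonpos _
    integrable_sq_w := (integrableOn_iff_integrable_of_support_subset support_sq).1
      ((hv2.mono_set Ioi_subset_Ici_self).congr hvw2) }, rfl, fun x hx => ?_, ?_⟩
  · rw [WaveData.initial, intervalIntegral.integral_of_le hx, intervalIntegral.integral_of_le hx]
    exact integral_congr_ae
      (ae_restrict_of_ae_restrict_of_subset Ioc_subset_Ioi_self hvw.symm)
  · rw [WaveData.energy, ← setIntegral_eq_integral_of_forall_compl_eq_zero
      fun x hx => notMem_support.1 (notMem_subset support_sq hx), integral_Ici_eq_integral_Ioi]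
    exact integral_congr_ae hvw2.symm

theorem WaveData.exists_abs_sol_sub_le_rpow (D : WaveData) {S : Set (ℝ × ℝ)}
    (hS : Bornology.IsBounded S) : ∃ C, 0 < C ∧ ∀ t x s y, (t, x) ∈ S → (s, y) ∈ S →
      |D.sol t x - D.sol s y| ≤ C * (|t - s| + |x - y|) ^ (1 / 2 : ℝ) := by
  obtain ⟨R, hR⟩ := hS.exists_norm_le
  obtain ⟨C, hC, holder⟩ := D.exists_abs_sol_sub_le R
  refine ⟨C, hC, fun t x s y htx hsy => ?_⟩
  rw [← sqrt_eq_rpow]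
  exact holder t x s y ((norm_fst_le _).trans (hR _ htx)) ((norm_snd_le _).trans (hR _ htx))
    ((norm_fst_le _).trans (hR _ hsy))

end InitialData

end VariationalWave

/-- Global existence of a solution of the integrated asymptotic variational wave
equation `u_t + f(u)_x = (1/2)∫₀^x f''(u)u_x² dy` on the quarter plane, with zero
boundary data at `x = 0`, for a flux `f` with `f'(0) ≥ 0` and Lipschitz `f''`,
and finite-energy absolutely continuous initial data `ū`.

Absolutely continuous functions are encoded through their derivatives via the
fundamental theorem of calculus; local Hölder continuity is expressed on bounded
subsets of the quarter plane. -/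
theorem stmt18 (f : ℝ → ℝ) (hf : ContDiff ℝ 2 f) (hf0 : 0 ≤ deriv f 0)
    (L : NNReal) (hfLip : LipschitzWith L (deriv (deriv f)))
    (ubar ubar' : ℝ → ℝ)
    (hubar0 : ubar 0 = 0)
    (hubar'loc : ∀ x : ℝ, 0 ≤ x → IntervalIntegrable ubar' volume 0 x)
    (hubar : ∀ x : ℝ, 0 ≤ x → ubar x = ∫ y in (0:ℝ)..x, ubar' y)
    (hubar'L2 : IntegrableOn (fun x => (ubar' x) ^ 2) (Set.Ici 0)) :
    ∃ u ux : ℝ → ℝ → ℝ,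
      -- (a) local Hölder continuity in (t,x)
      (∀ S : Set (ℝ × ℝ), Bornology.IsBounded S → ∃ C α : ℝ, 0 < C ∧ 0 < α ∧ α ≤ 1 ∧
        ∀ t x s y : ℝ, (t, x) ∈ S → (s, y) ∈ S → 0 ≤ t → 0 ≤ x → 0 ≤ s → 0 ≤ y →
          |u t x - u s y| ≤ C * (|t - s| + |x - y|) ^ α) ∧
      -- (b) initial and boundary conditions
      (∀ x : ℝ, 0 ≤ x → u 0 x = ubar x) ∧
      (∀ t : ℝ, 0 ≤ t → u t 0 = 0) ∧
      -- (c) absolute continuity in x with nonincreasing energy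
      (∀ t : ℝ, 0 ≤ t →
        (∀ x : ℝ, 0 ≤ x → IntervalIntegrable (ux t) volume 0 x ∧
          u t x = ∫ y in (0:ℝ)..x, ux t y) ∧
        IntegrableOn (fun x => (ux t x) ^ 2) (Set.Ici 0) ∧
        ∫ x in Set.Ici (0:ℝ), (ux t x) ^ 2 ≤ ∫ x in Set.Ici (0:ℝ), (ubar' x) ^ 2) ∧
      -- (d) the integrated equation
      (∀ t : ℝ, 0 ≤ t → ∀ᵐ x ∂(volume.restrict (Set.Ici 0)),
        u t x = ubar x + ∫ s in (0:ℝ)..t,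
          (-(deriv f (u s x)) * ux s x +
            (1 / 2) * ∫ y in (0:ℝ)..x, deriv (deriv f) (u s y) * (ux s y) ^ 2)) := by
  obtain ⟨D, rfl, initial_eq, energy_eq⟩ :=
    VariationalWave.exists_waveData hf hf0 hfLip hubar'loc hubar'L2
  replace initial_eq : ∀ x, 0 ≤ x → D.initial x = ubar x := fun x hx =>
    (initial_eq x hx).trans (hubar x hx).symm
  refine ⟨D.sol, D.solDeriv, fun S hS => ?_, fun x hx => ?_, fun t => D.sol_zero_right,
    fun t ht => ⟨fun x _ => ⟨D.intervalIntegrable_solDeriv t 0 x, D.sol_eq_integral ht x⟩,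
      (D.integrable_sq_solDeriv t).integrableOn, ?_⟩, fun t ht => ?_⟩
  · obtain ⟨C, hC, holder⟩ := D.exists_abs_sol_sub_le_rpow hS
    exact ⟨C, 1 / 2, hC, by norm_num, by norm_num,
      fun t x s y htx hsy _ _ _ _ => holder t x s y htx hsy⟩
  · rw [D.sol_zero_left, initial_eq x hx]
  · exact energy_eq ▸ D.setIntegral_sq_solDeriv_le t _
  · filter_upwards [D.ae_sol_eq ht, ae_restrict_mem measurableSet_Ici] with x hx hx0
    rw [hx, initial_eq x hx0]
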